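/- arXiv:2604.20929 — 3 statements merged into one kernel-verified Lean document; each statement's English description precedes it below -/
import Mathlib

section
/- Let F ∈ R^{l×l}, let f ∈ K[z_2, …, z_n], and suppose (z_1 − f) divides det(F). If for some k with 1 ≤ k < l the k×k minors of F have gcd 1 (i.e. d_k(F) = 1 up to a unit), J_k(F) = R, and (z_1 − f) divides d_{k+1}(F), then there exists a unimodular matrix U ∈ R^{l×l} whose entries do not involve z_1 such that U·F = diag(I_k, (z_1 − f)·I_{l−k}) · G for some G ∈ R^{l×l}. -/
open MvPolynomial Matrix

section Defs

variable {A : Type*} [CommRing A]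

/-- The set of all `k × k` minors of a matrix. -/
def minorsSet {l m : ℕ} (F : Matrix (Fin l) (Fin m) A) (k : ℕ) : Set A :=
  { p | ∃ (r : Fin k ↪ Fin l) (c : Fin k ↪ Fin m), p = (F.submatrix ⇑r ⇑c).det }

/-- `d` is a greatest common divisor of the `k × k` minors of `F`. -/
def IsGcdMinors {l m : ℕ} (F : Matrix (Fin l) (Fin m) A) (k : ℕ) (d : A) : Prop :=
  (∀ p ∈ minorsSet F k, d ∣ p) ∧ ∀ e : A, (∀ p ∈ minorsSet F k, e ∣ p) → e ∣ d

/-- The ideal generated by the `k × k` reduced minors of `F`, relative to a gcd `d`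
of the `k × k` minors (the reduced minors are the `v` with `d * v` a minor). -/
def reducedIdeal {l m : ℕ} (F : Matrix (Fin l) (Fin m) A) (k : ℕ) (d : A) : Ideal A :=
  Ideal.span { v : A | d * v ∈ minorsSet F k }

/-- `J_k(F) = R`: the `k × k` reduced minors of `F` generate the unit ideal. -/
def JkUnit {l m : ℕ} (F : Matrix (Fin l) (Fin m) A) (k : ℕ) : Prop :=
  ∃ d : A, IsGcdMinors F k d ∧ reducedIdeal F k d = ⊤

/-- `F` has rank `r`: some `r × r` minor is nonzero and all `(r+1) × (r+1)` minors vanish. -/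
def HasRank {l m : ℕ} (F : Matrix (Fin l) (Fin m) A) (r : ℕ) : Prop :=
  (∃ p ∈ minorsSet F r, p ≠ 0) ∧ ∀ p ∈ minorsSet F (r + 1), p = 0

/-- Equivalence of matrices: `F₁ = U * F₂ * V` for unimodular `U`, `V`. -/
def MatEquiv {l m : ℕ} (F₁ F₂ : Matrix (Fin l) (Fin m) A) : Prop :=
  ∃ (U : Matrix (Fin l) (Fin l) A) (V : Matrix (Fin m) (Fin m) A),
    IsUnit U.det ∧ IsUnit V.det ∧ F₁ = U * F₂ * V

/-- The rectangular diagonal matrix with diagonal entries `Φ`. -/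
def smithDiag {l m : ℕ} (Φ : Fin l → A) : Matrix (Fin l) (Fin m) A :=
  Matrix.of fun i j => if (i : ℕ) = (j : ℕ) then Φ i else 0

/-- `F` (of rank `r`) is equivalent to its Smith form: there are diagonal entries `Φ` such that
for each `i ≤ r` the product `Φ_1 ⋯ Φ_i` is a gcd of the `i × i` minors of `F`
(i.e. `Φ_i = d_i(F)/d_{i-1}(F)`), `Φ_i = 0` for `i > r`, and `F` is equivalent to
the diagonal matrix with entries `Φ`. -/
def SmithEquivAt {l m : ℕ} (F : Matrix (Fin l) (Fin m) A) (r : ℕ) : Prop :=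
  ∃ Φ : Fin l → A,
    (∀ i : Fin l, (i : ℕ) < r →
      IsGcdMinors F ((i : ℕ) + 1) (∏ j ∈ Finset.Iic i, Φ j)) ∧
    (∀ i : Fin l, r ≤ (i : ℕ) → Φ i = 0) ∧
    MatEquiv F (smithDiag Φ)

/-- `F` is equivalent to its Smith form. -/
def EquivToSmith {l m : ℕ} (F : Matrix (Fin l) (Fin m) A) : Prop :=
  ∃ r : ℕ, HasRank F r ∧ SmithEquivAt F r

end Defs

/-- `e` factors as `u * v` with `v * u = 1`: the image of `e` is free. -/
def Triv {A : Type*} [CommRing A] {l : ℕ} (e : Matrix (Fin l) (Fin l) A) : Prop :=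
  ∃ (r : ℕ) (u : Matrix (Fin l) (Fin r) A) (v : Matrix (Fin r) (Fin l) A), u * v = e ∧ v * u = 1

lemma Triv.map {A B : Type*} [CommRing A] [CommRing B] {l : ℕ} {e : Matrix (Fin l) (Fin l) A}
    (h : Triv e) (φ : A →+* B) : Triv (e.map φ) := by
  obtain ⟨r, u, v, h1, h2⟩ := h
  refine ⟨r, u.map φ, v.map φ, ?_, ?_⟩
  · rw [← Matrix.map_mul, h1]
  · rw [← Matrix.map_mul, h2]; simp [Matrix.map_one]

lemma triv_of_pid {A : Type*} [CommRing A] [IsDomain A] [IsPrincipalIdealRing A] {l : ℕ}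
    (e : Matrix (Fin l) (Fin l) A) (he : e * e = e) : Triv e := by
  obtain ⟨r, ⟨b⟩⟩ := Submodule.nonempty_basis_of_pid (Pi.basisFun A (Fin l))
    (LinearMap.range (Matrix.toLin' e))
  let w : Fin l → LinearMap.range (Matrix.toLin' e) := fun j =>
    ⟨Matrix.toLin' e (Pi.single j 1), ⟨_, rfl⟩⟩
  let u : Matrix (Fin l) (Fin r) A := Matrix.of fun i j => (b j : Fin l → A) i
  let v : Matrix (Fin r) (Fin l) A := Matrix.of fun i j => b.repr (w j) i
  have huv : u * v = e := by
    ext i j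
    have := congrArg (fun x : LinearMap.range (Matrix.toLin' e) => (x : Fin l → A) i) (b.sum_repr (w j))
    simp only [Submodule.coe_sum, Finset.sum_apply, Submodule.coe_smul, Pi.smul_apply, smul_eq_mul, w] at this
    simp only [Matrix.mul_apply, u, v, Matrix.of_apply, w]
    simp only [mul_comm] at this ⊢
    rw [this]; simp
  refine ⟨r, u, v, huv, ?_⟩
  have heu : e * u = u := by
    ext i j
    obtain ⟨y, hy⟩ := (b j).2
    have : e *ᵥ (b j : Fin l → A) = b j := by
      rw [← hy]; simp [he]
    exact congrFun this i
  have h3 : u * (v * u) = u * (1 : Matrix (Fin r) (Fin r) A) := by rw [← Matrix.mul_assoc, huv, heu, Matrix.mul_one]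
  have hinj : ∀ x y : Fin r → A, u *ᵥ x = u *ᵥ y → x = y := by
    intro x y hxy
    have key : ∀ z : Fin r → A, u *ᵥ z = ((∑ j, z j • b j : LinearMap.range (Matrix.toLin' e)) : Fin l → A) := by
      intro z; ext i
      simp [Matrix.mulVec, dotProduct, u, mul_comm]
    rw [key, key] at hxy
    have h4 := Subtype.ext hxy
    have h5 := congrArg b.equivFun h4
    funext i
    have := congrFun h5 i
    simpa [Finsupp.single_apply] using this
  ext i j
  have := hinj ((v * u).col j) ((1 : Matrix (Fin r) (Fin r) A).col j) (by
    funext i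
    exact congrFun (congrFun h3 i) j)
  exact congrFun this i

/-- lifting invertible matrices along a surjection to a field -/
lemma lift_inv {T F : Type*} [CommRing T] [Field F] (π : T →+* F)
    (hs : Function.Surjective π) (hu : ∀ x : F, x ≠ 0 → ∃ y : T, IsUnit y ∧ π y = x) {r : ℕ}
    (M : Matrix (Fin r) (Fin r) F) (hM : M.det ≠ 0) :
    ∃ C : Matrix (Fin r) (Fin r) T, IsUnit C.det ∧ C.map π = M := by
  refine Matrix.diagonal_transvection_induction_of_det_ne_zero
    (fun M => ∃ C : Matrix (Fin r) (Fin r) T, IsUnit C.det ∧ C.map π = M) M hM ?_ ?_ ?_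
  · intro D hD
    have : ∀ i, D i ≠ 0 := by
      rw [Matrix.det_diagonal, Finset.prod_ne_zero_iff] at hD
      exact fun i => hD i (Finset.mem_univ i)
    choose y hy hy' using fun i => hu (D i) (this i)
    refine ⟨Matrix.diagonal y, ?_, ?_⟩
    · rw [Matrix.det_diagonal]
      exact IsUnit.prod_univ_iff.2 hy
    · ext i j
      by_cases hij : i = j
      · subst hij; simp [hy']
      · simp [hij]
  · intro t
    obtain ⟨c, hc⟩ := hs t.c
    refine ⟨Matrix.transvection t.i t.j c, ?_, ?_⟩
    · rw [Matrix.det_transvection_of_ne _ _ t.hij]; exact isUnit_one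
    · ext i j
      simp [Matrix.TransvectionStruct.toMatrix, Matrix.transvection, Matrix.single_apply, ← hc, Matrix.one_apply, apply_ite π]
  · rintro A B hA hB ⟨C, hC, rfl⟩ ⟨D, hD, rfl⟩
    exact ⟨C * D, by rw [Matrix.det_mul]; exact hC.mul hD, by rw [Matrix.map_mul]⟩

set_option linter.unusedSectionVars false
set_option autoImplicit false

section Horrocks
open Polynomial

/-- The submonoid of monic polynomials. -/
def monicS (R : Type*) [CommRing R] : Submonoid (Polynomial R) where
  carrier := {p | p.Monic}
  one_mem' := Polynomial.monic_one
  mul_mem' := fun ha hb => Polynomial.Monic.mul ha hb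

variable {R : Type*} [CommRing R] {T : Type*} [CommRing T] [Algebra (Polynomial R) T] [Algebra R T]
  [IsScalarTower R (Polynomial R) T]

variable (T) in
/-- Fractions `g / h` with `h` monic, `deg g ≤ deg h`, and `g` having coefficients in `a`. -/
def Bsub (a : Ideal R) : Submodule R T where
  carrier := {x | ∃ h g : Polynomial R, h.Monic ∧ g.natDegree ≤ h.natDegree ∧
    g ∈ a.map (Polynomial.C) ∧ algebraMap (Polynomial R) T h * x = algebraMap (Polynomial R) T g}
  zero_mem' := ⟨1, 0, monic_one, by simp, by simp, by simp⟩
  add_mem' := by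
    rintro x y ⟨h, g, hh, hd, hg, hx⟩ ⟨h', g', hh', hd', hg', hy⟩
    refine ⟨h * h', g * h' + h * g', hh.mul hh', ?_, ?_, ?_⟩
    · rw [hh.natDegree_mul hh']
      refine (natDegree_add_le _ _).trans (max_le ?_ ?_)
      · exact natDegree_mul_le.trans (by omega)
      · exact natDegree_mul_le.trans (by omega)
    · exact Ideal.add_mem _ (Ideal.mul_mem_right _ _ hg) (Ideal.mul_mem_left _ _ hg')
    · simp only [map_mul, map_add, ← hx, ← hy]; ring
  smul_mem' := by
    rintro c x ⟨h, g, hh, hd, hg, hx⟩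
    refine ⟨h, Polynomial.C c * g, hh, (natDegree_C_mul_le _ _).trans hd, Ideal.mul_mem_left _ _ hg, ?_⟩
    rw [map_mul, ← hx, Algebra.smul_def, IsScalarTower.algebraMap_apply R (Polynomial R) T]
    simp only [Polynomial.algebraMap_eq]; ring

lemma Bsub_mul {a b : Ideal R} {x y : T} (hx : x ∈ Bsub T a) (hy : y ∈ Bsub T b) :
    x * y ∈ Bsub T a := by
  obtain ⟨h, g, hh, hd, hg, hx⟩ := hx
  obtain ⟨h', g', hh', hd', hg', hy⟩ := hy
  refine ⟨h * h', g * g', hh.mul hh', ?_, Ideal.mul_mem_right _ _ hg, ?_⟩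
  · rw [hh.natDegree_mul hh']
    exact natDegree_mul_le.trans (by omega)
  · simp only [map_mul, ← hx, ← hy]; ring

lemma Bsub_mono {a b : Ideal R} (hab : a ≤ b) : Bsub T a ≤ Bsub T b := by
  rintro x ⟨h, g, hh, hd, hg, hx⟩
  exact ⟨h, g, hh, hd, Ideal.map_mono hab hg, hx⟩

lemma smul_Bsub (a : Ideal R) : a • Bsub T (⊤ : Ideal R) ≤ Bsub T a := by
  rw [Submodule.smul_le]
  rintro c hc x ⟨h, g, hh, hd, hg, hx⟩
  refine ⟨h, Polynomial.C c * g, hh, (natDegree_C_mul_le _ _).trans hd,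
    Ideal.mul_mem_right _ _ (Ideal.mem_map_of_mem _ hc), ?_⟩
  rw [map_mul, ← hx, Algebra.smul_def, IsScalarTower.algebraMap_apply R (Polynomial R) T]
  simp only [Polynomial.algebraMap_eq]; ring

lemma Bsub_one : (1 : T) ∈ Bsub T (⊤ : Ideal R) :=
  ⟨1, 1, monic_one, le_rfl, by rw [Ideal.map_top]; trivial, by simp⟩

variable (R T) in
/-- `Bsub ⊤` as a subring. -/
def Bring : Subring T where
  carrier := Bsub T (⊤ : Ideal R)
  mul_mem' := fun ha hb => Bsub_mul ha hb
  one_mem' := Bsub_one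
  add_mem' := fun ha hb => Submodule.add_mem _ ha hb
  zero_mem' := Submodule.zero_mem _
  neg_mem' := fun ha => Submodule.neg_mem _ ha

/-- `Bsub a` as an ideal of `Bring`. -/
def Bideal (a : Ideal R) : Ideal (Bring R T) where
  carrier := {x | (x : T) ∈ Bsub T a}
  add_mem' := fun ha hb => Submodule.add_mem (Bsub T a) ha hb
  zero_mem' := Submodule.zero_mem (Bsub T a)
  smul_mem' := fun c x hx => by
    have := Bsub_mul hx c.2
    rw [mul_comm] at this
    exact this

lemma det_one_add_mem {r : ℕ} {a : Ideal R} (M : Matrix (Fin r) (Fin r) T)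
    (hM : ∀ i j, M i j ∈ Bsub T a) : (1 + M).det - 1 ∈ Bsub T a := by
  let M' : Matrix (Fin r) (Fin r) (Bring R T) := Matrix.of fun i j =>
    ⟨M i j, Bsub_mono le_top (hM i j)⟩
  have h1 : (1 + M).det = ((1 + M').det : Bring R T) := by
    have := RingHom.map_det (Bring R T).subtype (1 + M')
    rw [Subring.subtype_apply] at this
    rw [this]
    congr 1
    rw [map_add, map_one]
    congr 1
  have h2 : (1 + M').det - 1 ∈ Bideal (T := T) a := by
    rw [← Ideal.Quotient.eq, RingHom.map_det, map_add, map_one]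
    have : (Ideal.Quotient.mk (Bideal (T := T) a)).mapMatrix M' = 0 := by
      ext i j
      exact Ideal.Quotient.eq_zero_iff_mem.2 (hM i j)
    rw [this, add_zero, Matrix.det_one, map_one]
  have h3 : (((1 + M').det - 1 : Bring R T) : T) ∈ Bsub T a := h2
  rw [h1]
  exact h3

lemma map_C_mul_mem (a : Ideal R) {g : Polynomial R} (hg : g ∈ a.map (Polynomial.C)) (y : T) :
    algebraMap (Polynomial R) T g * y ∈ a • (⊤ : Submodule R T) := by
  rw [g.as_sum_range, map_sum, Finset.sum_mul]
  refine Submodule.sum_mem _ fun i _ => ?_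
  have : algebraMap (Polynomial R) T (monomial i (g.coeff i)) * y =
      g.coeff i • (algebraMap (Polynomial R) T (Polynomial.X ^ i) * y) := by
    rw [← Polynomial.C_mul_X_pow_eq_monomial, map_mul, Algebra.smul_def,
      IsScalarTower.algebraMap_apply R (Polynomial R) T]
    simp only [Polynomial.algebraMap_eq]; ring
  rw [this]
  exact Submodule.smul_mem_smul (Ideal.mem_map_C_iff.1 hg i) trivial

variable [IsLocalization (monicS R) T]

lemma monic_unit {h : Polynomial R} (hh : h.Monic) : IsUnit (algebraMap (Polynomial R) T h) :=
  IsLocalization.map_units T (⟨h, hh⟩ : monicS R)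

lemma unit_of_Bsub [IsLocalRing R] {x : T}
    (hx : x - 1 ∈ Bsub T (IsLocalRing.maximalIdeal R)) : IsUnit x := by
  obtain ⟨h, g, hh, hd, hg, hx⟩ := hx
  have hx2 : algebraMap (Polynomial R) T h * x = algebraMap (Polynomial R) T (h + g) := by
    rw [map_add, ← hx]; ring
  have hu : IsUnit ((h + g).coeff h.natDegree) := by
    rw [Polynomial.coeff_add, hh.coeff_natDegree]
    have := Ideal.mem_map_C_iff.1 hg h.natDegree
    by_contra hcon
    have h1 : (1 + g.coeff h.natDegree) ∈ IsLocalRing.maximalIdeal R := hcon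
    have h2 := Ideal.sub_mem _ h1 this
    rw [add_sub_cancel_right] at h2
    exact (Ideal.ne_top_iff_one _).1 (IsLocalRing.maximalIdeal.isMaximal R).ne_top h2
  obtain ⟨c, hc⟩ := hu
  have hm : (Polynomial.C (↑c⁻¹ : R) * (h + g)).Monic := by
    refine monic_of_natDegree_le_of_coeff_eq_one h.natDegree ?_ ?_
    · refine (natDegree_C_mul_le _ _).trans ((natDegree_add_le _ _).trans (max_le le_rfl hd))
    · rw [Polynomial.coeff_C_mul, ← hc, Units.inv_mul]
  have h3 := monic_unit (T := T) hm
  rw [map_mul, ← hx2] at h3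
  exact isUnit_of_mul_isUnit_right (isUnit_of_mul_isUnit_right h3)

lemma T_decomp [Nontrivial R] {f : Polynomial R} (hf : f.Monic) (t : T) :
    ∃ q p : Polynomial R, p ∈ Polynomial.degreeLT R (f.natDegree + 1) ∧
      t - algebraMap (Polynomial R) T (f * q + p) ∈ Bsub T (⊤ : Ideal R) := by

  obtain ⟨g, ⟨h, hh⟩, rfl⟩ := IsLocalization.exists_mk'_eq (monicS R) t
  have hh' : h.Monic := hh
  have hfh : (f * h).Monic := hf.mul hh'
  set s := g %ₘ (f * h) with hs
  have hsd : s.degree < (f * h).degree := degree_modByMonic_lt _ hfh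
  refine ⟨g /ₘ (f * h), s /ₘ h, ?_, h, s %ₘ h, hh', ?_, ?_, ?_⟩
  · rw [mem_degreeLT]
    refine degree_le_natDegree.trans_lt ?_
    rw [natDegree_divByMonic _ hh']
    have : s.natDegree ≤ (f * h).natDegree := natDegree_le_natDegree hsd.le
    rw [hf.natDegree_mul hh'] at this
    exact_mod_cast (by omega : s.natDegree - h.natDegree < f.natDegree + 1)
  · exact natDegree_le_natDegree (degree_modByMonic_lt _ hh').le
  · rw [Ideal.map_top]; trivial
  · rw [mul_sub, IsLocalization.mk'_spec' (M := monicS R) T g ⟨h, hh⟩, ← map_mul, ← map_sub]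
    congr 1
    have e1 := modByMonic_add_div g (f * h)
    have e2 := modByMonic_add_div s h
    rw [← hs] at e1
    linear_combination (-1 : Polynomial R) * e1 - e2

lemma degreeLT_fg (d : ℕ) : (Polynomial.degreeLT R d).FG := by
  classical
  rw [Polynomial.degreeLT_eq_span_X_pow]
  exact Submodule.fg_span (Finset.finite_toSet _)

lemma ker_pi [IsLocalRing R] {F : Type*} [Field F]
    [Algebra (Polynomial (IsLocalRing.ResidueField R)) F]
    [IsFractionRing (Polynomial (IsLocalRing.ResidueField R)) F] (π : T →+* F)
    (hπ : ∀ a, π (algebraMap (Polynomial R) T a) =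
      algebraMap (Polynomial (IsLocalRing.ResidueField R)) F (a.map (IsLocalRing.residue R)))
    {x : T} (hx : π x = 0) : x ∈ (IsLocalRing.maximalIdeal R) • (⊤ : Submodule R T) := by
  obtain ⟨g, ⟨h, hh⟩, rfl⟩ := IsLocalization.exists_mk'_eq (monicS R) x
  have h1 := IsLocalization.mk'_spec (M := monicS R) T g ⟨h, hh⟩
  have h2 : g.map (IsLocalRing.residue R) = 0 := by
    have h3 := congrArg π h1
    rw [map_mul, hx, zero_mul, hπ] at h3
    exact (map_eq_zero_iff _ (IsFractionRing.injective _ F)).1 h3.symm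
  have h4 : g ∈ (IsLocalRing.maximalIdeal R).map (Polynomial.C) := by
    rw [Ideal.mem_map_C_iff]
    intro n
    have := congrArg (fun p => p.coeff n) h2
    simp only [Polynomial.coeff_map, Polynomial.coeff_zero] at this
    exact (IsLocalRing.residue_eq_zero_iff _).1 this
  obtain ⟨c, hc⟩ := monic_unit (T := T) (show h.Monic from hh)
  have h5 : IsLocalization.mk' T g (⟨h, hh⟩ : monicS R) = algebraMap (Polynomial R) T g * ↑c⁻¹ := by
    rw [← h1]
    simp only [← hc, mul_assoc, Units.mul_inv, mul_one]
  rw [h5]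
  exact map_C_mul_mem _ h4 _

lemma pi_smul_top {S M : Type*} [CommRing S] [AddCommGroup M] [Module S M] (a : Ideal S) {r : ℕ}
    (N : Submodule S M) (x : Fin r → M) (hx : ∀ i, x i ∈ a • N) :
    x ∈ a • Submodule.pi Set.univ (fun _ : Fin r => N) := by
  classical
  have : x = ∑ i, LinearMap.single S (fun _ => M) i (x i) := by
    simp [LinearMap.sum_single_apply]
  rw [this]
  refine Submodule.sum_mem _ fun i _ => ?_
  have h1 := Submodule.mem_map_of_mem (f := LinearMap.single S (fun _ : Fin r => M) i) (hx i)
  rw [Submodule.map_smul''] at h1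
  refine Submodule.smul_mono (le_refl a) ?_ h1
  rintro _ ⟨y, hy, rfl⟩ j -
  by_cases hij : j = i
  · subst hij; simpa using hy
  · simp [hij]

lemma smul_pi_apply {S M : Type*} [CommRing S] [AddCommGroup M] [Module S M] (a : Ideal S) {r : ℕ}
    (N : Submodule S M) (x : Fin r → M)
    (hx : x ∈ a • Submodule.pi Set.univ (fun _ : Fin r => N)) (i : Fin r) : x i ∈ a • N := by
  have h1 := Submodule.mem_map_of_mem (f := LinearMap.proj (R := S) (φ := fun _ : Fin r => M) i) hx
  rw [Submodule.map_smul''] at h1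
  refine Submodule.smul_mono (le_refl a) ?_ h1
  rintro _ ⟨y, hy, rfl⟩
  exact hy i trivial

/-- The coordinate map `x ↦ v x`. -/
noncomputable def iotaLin {l r : ℕ} (v : Matrix (Fin r) (Fin l) T) : (Fin l → Polynomial R) →ₗ[R] (Fin r → T) where
  toFun x := v *ᵥ (fun i => algebraMap (Polynomial R) T (x i))
  map_add' x y := by
    rw [← Matrix.mulVec_add]; congr 1; ext i; simp
  map_smul' c x := by
    rw [RingHom.id_apply, ← Matrix.mulVec_smul]; congr 1; ext i
    simp only [Pi.smul_apply]
    rw [Algebra.smul_def, map_mul, Algebra.smul_def, IsScalarTower.algebraMap_apply R (Polynomial R) T]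

lemma iotaLin_mul {l r : ℕ} (v : Matrix (Fin r) (Fin l) T) (q : Polynomial R) (x : Fin l → Polynomial R) :
    iotaLin v (q • x) = algebraMap (Polynomial R) T q • iotaLin v x := by
  simp only [iotaLin, LinearMap.coe_mk, AddHom.coe_mk, ← Matrix.mulVec_smul]
  congr 1; ext i; simp

lemma claim_one [IsLocalRing R] {l r : ℕ} (v : Matrix (Fin r) (Fin l) T)
    (p : Fin r → Fin l → Polynomial R)
    (hp : ∀ i, Pi.single i 1 - iotaLin v (p i) ∈
      IsLocalRing.maximalIdeal R • (⊤ : Submodule R (Fin r → T)))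
    (f : Polynomial R) (hf : f.Monic) (x : Fin r → Fin l → Polynomial R)
    (hx : ∀ i, iotaLin v (x i) = Pi.single i (algebraMap (Polynomial R) T f)) :
    LinearMap.range (iotaLin (R := R) v) ⊔ Submodule.pi Set.univ (fun _ => Bsub T (⊤ : Ideal R)) = ⊤ := by
  classical
  set m := IsLocalRing.maximalIdeal R with hm
  set L : Submodule R (Fin r → T) := Submodule.pi Set.univ (fun _ => Bsub T (⊤ : Ideal R)) with hL
  set N := LinearMap.range (iotaLin (R := R) v) ⊔ L with hN
  let W : Submodule R (Fin r → T) := Submodule.pi Set.univ (fun _ =>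
    (Polynomial.degreeLT R (f.natDegree + 1)).map
      (IsScalarTower.toAlgHom R (Polynomial R) T).toLinearMap)
  have hWfg : W.FG := Submodule.fg_pi fun _ => (degreeLT_fg _).map _
  have hmT : ∀ (t : T) (y : Fin r → T), y ∈ m • (⊤ : Submodule R (Fin r → T)) →
      t • y ∈ m • (⊤ : Submodule R (Fin r → T)) := by
    intro t y hy
    have h1 := Submodule.mem_map_of_mem
      (f := (LinearMap.lsmul T (Fin r → T) t).restrictScalars R) hy
    rw [Submodule.map_smul''] at h1
    exact Submodule.smul_mono le_rfl le_top h1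
  have hsum : ∀ y : Fin r → T, y = ∑ i, y i • (Pi.single i (1 : T) : Fin r → T) := by
    intro y
    exact pi_eq_sum_univ' y |>.trans (by
      refine Finset.sum_congr rfl fun i _ => ?_
      congr 1)
  choose q s hs hqs using fun t : T => T_decomp (T := T) hf t
  have hB : ∀ (t : T) (i : Fin r), t ∈ Bsub T (⊤ : Ideal R) → (Pi.single i t : Fin r → T) ∈ L := by
    intro t i ht j _
    by_cases hij : j = i
    · subst hij; simpa using ht
    · simp [hij]
  have h1 : (⊤ : Submodule R (Fin r → T)) ≤ N ⊔ m • (⊤ : Submodule R (Fin r → T)) := by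
    intro y _
    rw [hsum y]
    refine Submodule.sum_mem _ fun i _ => ?_
    have e1 : y i • (Pi.single i (1 : T) : Fin r → T) =
        (iotaLin v ((f * q (y i) + s (y i)) • p i) +
          Pi.single i (y i - algebraMap (Polynomial R) T (f * q (y i) + s (y i)))) +
        algebraMap (Polynomial R) T (f * q (y i) + s (y i)) • (Pi.single i 1 - iotaLin v (p i)) := by
      rw [iotaLin_mul, smul_sub]
      have : (Pi.single i (y i - algebraMap (Polynomial R) T (f * q (y i) + s (y i))) : Fin r → T) =
        y i • Pi.single i (1 : T) -
          algebraMap (Polynomial R) T (f * q (y i) + s (y i)) • Pi.single i (1 : T) := by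
        ext j; by_cases hij : j = i
        · subst hij; simp
        · simp [hij]
      rw [this]; abel
    rw [e1]
    refine Submodule.add_mem_sup (Submodule.add_mem_sup ⟨_, rfl⟩ (hB _ _ (hqs _))) (hmT _ _ (hp i))
  have h2 : (⊤ : Submodule R (Fin r → T)) ≤ N ⊔ W := by
    intro y _
    rw [hsum y]
    refine Submodule.sum_mem _ fun i _ => ?_
    have e1 : y i • (Pi.single i (1 : T) : Fin r → T) =
        (iotaLin v (q (y i) • x i) +
          Pi.single i (y i - algebraMap (Polynomial R) T (f * q (y i) + s (y i)))) +
        Pi.single i (algebraMap (Polynomial R) T (s (y i))) := by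
      rw [iotaLin_mul, hx]
      ext j; by_cases hij : j = i
      · subst hij; simp [Algebra.smul_def]; ring
      · simp [hij]
    rw [e1]
    refine Submodule.add_mem_sup (Submodule.add_mem_sup ⟨_, rfl⟩ (hB _ _ (hqs _))) ?_
    intro j _
    by_cases hij : j = i
    · subst hij
      exact ⟨s (y j), hs _, by simp⟩
    · rw [Pi.single_eq_of_ne hij]; exact Submodule.zero_mem _
  have h3 : W ≤ N := by
    refine Submodule.le_of_le_smul_of_le_jacobson_bot hWfg
      (IsLocalRing.maximalIdeal_le_jacobson ⊥) ?_
    calc W ≤ ⊤ := le_top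
      _ ≤ N ⊔ m • (⊤ : Submodule R (Fin r → T)) := h1
      _ ≤ N ⊔ m • (N ⊔ W) := sup_le_sup_left (Submodule.smul_mono le_rfl h2) _
      _ ≤ N ⊔ m • W := by
        rw [Submodule.smul_sup]
        refine sup_le le_sup_left (sup_le (Submodule.smul_le_right.trans le_sup_left) le_sup_right)
  exact top_le_iff.1 (h2.trans (sup_le le_rfl h3))

lemma le_of_mul_one {F : Type*} [CommRing F] [Nontrivial F] {r s : ℕ}
    (A : Matrix (Fin r) (Fin s) F) (B : Matrix (Fin s) (Fin r) F) (h : A * B = 1) : r ≤ s := by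
  have h1 := Matrix.rank_mul_le_left A B
  rw [h, Matrix.rank_one, Fintype.card_fin] at h1
  exact h1.trans (by simpa using A.rank_le_card_width)

lemma exists_pi [IsLocalRing R] : ∃ π : T →+* FractionRing (Polynomial (IsLocalRing.ResidueField R)),
    (∀ a, π (algebraMap (Polynomial R) T a) =
      algebraMap (Polynomial (IsLocalRing.ResidueField R)) _ (a.map (IsLocalRing.residue R))) ∧
    Function.Surjective π ∧ ∀ x, x ≠ 0 → ∃ y : T, IsUnit y ∧ π y = x := by
  let k := IsLocalRing.ResidueField R
  let F := FractionRing (Polynomial k)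
  let g : Polynomial R →+* F := (algebraMap (Polynomial k) F).comp
    (Polynomial.mapRingHom (IsLocalRing.residue R))
  have hg : ∀ y : monicS R, IsUnit (g y) := by
    rintro ⟨y, hy⟩
    have : (y.map (IsLocalRing.residue R)).Monic := Polynomial.Monic.map _ hy
    refine IsUnit.mk0 _ ?_
    exact (map_ne_zero_iff _ (IsFractionRing.injective (Polynomial k) F)).2 this.ne_zero
  let π : T →+* F := IsLocalization.lift (M := monicS R) hg
  have hπ : ∀ a, π (algebraMap (Polynomial R) T a) =
      algebraMap (Polynomial k) F (a.map (IsLocalRing.residue R)) := fun a =>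
    IsLocalization.lift_eq hg a
  have hu0 : ∀ a : Polynomial k, a ≠ 0 → ∃ y : T, IsUnit y ∧ π y = algebraMap (Polynomial k) F a := by
    intro a ha
    have hl : a.leadingCoeff ≠ 0 := leadingCoeff_ne_zero.2 ha
    obtain ⟨c, hc⟩ := IsLocalRing.residue_surjective a.leadingCoeff
    have hcu : IsUnit c := by
      rw [← IsLocalRing.residue_ne_zero_iff_isUnit, hc]; exact hl
    obtain ⟨q, hq, -, hqm⟩ := Polynomial.lifts_and_degree_eq_and_monic
      (f := IsLocalRing.residue R) (p := Polynomial.C a.leadingCoeff⁻¹ * a)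
      ((Polynomial.mem_lifts _).2 (Polynomial.map_surjective _ IsLocalRing.residue_surjective _))
      (by rw [mul_comm]; exact Polynomial.monic_mul_leadingCoeff_inv ha)
    refine ⟨algebraMap (Polynomial R) T (Polynomial.C c * q), ?_, ?_⟩
    · rw [map_mul]
      exact ((hcu.map Polynomial.C).map _).mul (monic_unit hqm)
    · rw [hπ, Polynomial.map_mul, hq, Polynomial.map_C, hc, ← mul_assoc, ← Polynomial.C_mul,
        mul_inv_cancel₀ hl, Polynomial.C_1, one_mul]
  have hu : ∀ x : F, x ≠ 0 → ∃ y : T, IsUnit y ∧ π y = x := by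
    intro x hx
    obtain ⟨a, b, hb, rfl⟩ := IsFractionRing.div_surjective (A := Polynomial k) x
    have hb0 : b ≠ 0 := nonZeroDivisors.ne_zero hb
    have ha0 : a ≠ 0 := by rintro rfl; simp at hx
    obtain ⟨y, hy, hy'⟩ := hu0 a ha0
    obtain ⟨_, ⟨z, rfl⟩, hz'⟩ := hu0 b hb0
    refine ⟨y * ↑z⁻¹, hy.mul (Units.isUnit _), ?_⟩
    rw [map_mul, hy', ← hz', div_eq_mul_inv]
    congr 1
    exact eq_inv_of_mul_eq_one_left (by rw [← map_mul, Units.inv_mul, map_one])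
  refine ⟨π, hπ, ?_, hu⟩
  intro x
  by_cases hx : x = 0
  · exact ⟨0, by rw [map_zero, hx]⟩
  · obtain ⟨y, -, hy⟩ := hu x hx
    exact ⟨y, hy⟩

lemma adjust {F : Type*} [Field F] (π : T →+* F)
    (hs : Function.Surjective π) (hu : ∀ x : F, x ≠ 0 → ∃ y : T, IsUnit y ∧ π y = x) {l r s : ℕ}
    (E : Matrix (Fin l) (Fin l) T) (u : Matrix (Fin l) (Fin r) T) (v : Matrix (Fin r) (Fin l) T)
    (huv : u * v = E) (hvu : v * u = 1)
    (u0 : Matrix (Fin l) (Fin s) F) (v0 : Matrix (Fin s) (Fin l) F) (h0 : u0 * v0 = E.map π)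
    (h0' : v0 * u0 = 1) :
    ∃ (u : Matrix (Fin l) (Fin s) T) (v : Matrix (Fin s) (Fin l) T),
      u * v = E ∧ v * u = 1 ∧ u.map π = u0 := by
  have hUV : u.map π * v.map π = u0 * v0 := by rw [← Matrix.map_mul, huv, h0]
  have hVU : v.map π * u.map π = 1 := by rw [← Matrix.map_mul, hvu]; simp [Matrix.map_one]
  have h1 : (v.map π * u0) * (v0 * u.map π) = 1 := by
    calc _ = v.map π * (u0 * v0) * u.map π := by simp only [Matrix.mul_assoc]
      _ = (v.map π * u.map π) * (v.map π * u.map π) := by rw [← hUV]; simp only [Matrix.mul_assoc]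
      _ = 1 := by rw [hVU, Matrix.mul_one]
  have h2 : (v0 * u.map π) * (v.map π * u0) = 1 := by
    calc _ = v0 * (u.map π * v.map π) * u0 := by simp only [Matrix.mul_assoc]
      _ = (v0 * u0) * (v0 * u0) := by rw [hUV]; simp only [Matrix.mul_assoc]
      _ = 1 := by rw [h0', Matrix.mul_one]
  obtain rfl : r = s := le_antisymm (le_of_mul_one _ _ h1) (le_of_mul_one _ _ h2)
  have hdet : (v.map π * u0).det ≠ 0 := by
    intro h
    have := congrArg Matrix.det h1
    rw [Matrix.det_mul, h, zero_mul, Matrix.det_one] at this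
    exact zero_ne_one this
  obtain ⟨C, hC, hC'⟩ := lift_inv π hs hu _ hdet
  refine ⟨u * C, C⁻¹ * v, ?_, ?_, ?_⟩
  · rw [Matrix.mul_assoc, ← Matrix.mul_assoc C, Matrix.mul_nonsing_inv _ hC, Matrix.one_mul, huv]
  · rw [Matrix.mul_assoc, ← Matrix.mul_assoc v, hvu, Matrix.one_mul, Matrix.nonsing_inv_mul _ hC]
  · rw [Matrix.map_mul, hC', ← Matrix.mul_assoc, hUV, Matrix.mul_assoc, h0', Matrix.mul_one]

lemma mem_smul_of_map_zero [IsLocalRing R] {l : ℕ} (x : Fin l → Polynomial R)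
    (hx : ∀ i, (x i).map (IsLocalRing.residue R) = 0) :
    x ∈ IsLocalRing.maximalIdeal R • (⊤ : Submodule R (Fin l → Polynomial R)) := by
  refine Submodule.smul_mono le_rfl le_top (pi_smul_top _ ⊤ x fun i => ?_)
  have h4 : x i ∈ (IsLocalRing.maximalIdeal R).map (Polynomial.C) := by
    rw [Ideal.mem_map_C_iff]
    intro n
    have := congrArg (fun p => p.coeff n) (hx i)
    simp only [Polynomial.coeff_map, Polynomial.coeff_zero] at this
    exact (IsLocalRing.residue_eq_zero_iff _).1 this
  have := map_C_mul_mem (T := Polynomial R) _ h4 1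
  simpa using this

lemma map_zero_of_mem_smul [IsLocalRing R] {l : ℕ} (x : Fin l → Polynomial R)
    (hx : x ∈ IsLocalRing.maximalIdeal R • (⊤ : Submodule R (Fin l → Polynomial R))) (i : Fin l) :
    (x i).map (IsLocalRing.residue R) = 0 := by
  refine Submodule.smul_induction_on hx ?_ ?_
  · intro c hc y _
    rw [Pi.smul_apply, Polynomial.smul_eq_C_mul, Polynomial.map_mul, Polynomial.map_C,
      (IsLocalRing.residue_eq_zero_iff _).2 hc, Polynomial.C_0, zero_mul]
  · intro y z hy hz
    rw [Pi.add_apply, Polynomial.map_add, hy, hz, add_zero]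

lemma algMap_inj : Function.Injective (algebraMap (Polynomial R) T) :=
  IsLocalization.injective (M := monicS R) T (fun p hp => by
    have hp' : p.Monic := hp
    exact hp'.mem_nonZeroDivisors)

lemma clear_denoms {l r : ℕ} (u : Matrix (Fin l) (Fin r) T) :
    ∃ (f : Polynomial R) (x : Matrix (Fin l) (Fin r) (Polynomial R)), f.Monic ∧
      x.map (algebraMap (Polynomial R) T) = algebraMap (Polynomial R) T f • u := by
  obtain ⟨b, hb⟩ := IsLocalization.exist_integer_multiples_of_finite (monicS R)
    (fun ij : Fin l × Fin r => u ij.1 ij.2)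
  choose x hx using hb
  refine ⟨b, Matrix.of fun i j => x (i, j), b.2, ?_⟩
  ext i j
  rw [Matrix.map_apply, Matrix.of_apply, hx, Matrix.smul_apply, Algebra.smul_def, smul_eq_mul]

/-- Lattice correction step. -/
lemma claim_two [IsLocalRing R] {l r : ℕ} (v : Matrix (Fin r) (Fin l) T) (u : Matrix (Fin l) (Fin r) T)
    (hvu : v * u = 1) (p0 : Matrix (Fin l) (Fin r) (Polynomial R))
    (hp0 : ∀ i j, (1 - v * p0.map (algebraMap (Polynomial R) T) : Matrix (Fin r) (Fin r) T) i j ∈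
      IsLocalRing.maximalIdeal R • (⊤ : Submodule R T)) :
    ∃ Q : Matrix (Fin l) (Fin r) (Polynomial R),
      (Q.map (Polynomial.map (IsLocalRing.residue R)) = 0) ∧
      IsUnit (v * (p0 + Q).map (algebraMap (Polynomial R) T)).det := by
  classical
  obtain ⟨f, x, hf, hx⟩ := clear_denoms (R := R) u
  have hio : ∀ (A : Matrix (Fin l) (Fin r) (Polynomial R)) i,
      iotaLin v (fun j => A j i) = fun j => (v * A.map (algebraMap (Polynomial R) T)) j i := by
    intro A i; rfl
  have hp : ∀ i, Pi.single i 1 - iotaLin v (fun j => p0 j i) ∈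
      IsLocalRing.maximalIdeal R • (⊤ : Submodule R (Fin r → T)) := by
    intro i
    refine Submodule.smul_mono le_rfl le_top (pi_smul_top _ ⊤ _ fun j => ?_)
    have := hp0 j i
    rw [hio]
    convert this using 1
    simp [Matrix.one_apply, Pi.single_apply]
  have htop := claim_one v (fun i j => p0 j i) hp f hf (fun i j => x j i) (by
    intro i
    rw [hio, hx, Matrix.mul_smul, hvu]
    ext j
    simp [Matrix.one_apply, Pi.single_apply])
  have hex : ∀ i, ∃ q : Fin l → Polynomial R,
      q ∈ IsLocalRing.maximalIdeal R • (⊤ : Submodule R (Fin l → Polynomial R)) ∧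
      ∀ j, (Pi.single i 1 - iotaLin v (fun j => p0 j i) - iotaLin v q : Fin r → T) j ∈
        Bsub T (IsLocalRing.maximalIdeal R) := by
    intro i
    have h1 := hp i
    rw [← htop, Submodule.smul_sup, LinearMap.range_eq_map, ← Submodule.map_smul''] at h1
    obtain ⟨_, ⟨q, hq, rfl⟩, lam, hlam, hsum⟩ := Submodule.mem_sup.1 h1
    refine ⟨q, hq, fun j => ?_⟩
    rw [← hsum, add_sub_cancel_left]
    exact smul_Bsub _ (smul_pi_apply _ _ _ hlam j)
  choose q hq hq' using hex
  refine ⟨Matrix.of fun j i => q i j, ?_, ?_⟩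
  · ext1 j i
    exact map_zero_of_mem_smul _ (hq i) j
  · apply unit_of_Bsub (R := R)
    have e1 : v * (p0 + Matrix.of fun j i => q i j).map (algebraMap (Polynomial R) T) =
        1 + (v * (p0 + Matrix.of fun j i => q i j).map (algebraMap (Polynomial R) T) - 1) := by abel
    rw [e1]
    apply det_one_add_mem
    intro j i
    have h2 := Submodule.neg_mem _ (hq' i j)
    convert h2 using 1
    have h3 : iotaLin v (q i) = fun j' => (v * (Matrix.of fun j i => q i j :
      Matrix (Fin l) (Fin r) (Polynomial R)).map (algebraMap (Polynomial R) T)) j' i := rfl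
    rw [hio, h3, Matrix.map_add _ (fun a b => map_add _ a b), Matrix.mul_add]
    simp [Matrix.one_apply, Pi.single_apply]
    ring

/-- Horrocks' theorem for idempotent matrices over a local ring. -/
theorem horrocks [IsLocalRing R] {l : ℕ} (e : Matrix (Fin l) (Fin l) (Polynomial R)) (he : e * e = e)
    (hT : Triv (e.map (algebraMap (Polynomial R) T))) : Triv e := by
  classical
  let φ := algebraMap (Polynomial R) T
  let ρ := Polynomial.mapRingHom (IsLocalRing.residue R)
  let m := IsLocalRing.maximalIdeal R
  obtain ⟨π, hπ, hs, hu⟩ := exists_pi (R := R) (T := T)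
  obtain ⟨r, u0, v0, h0, h0'⟩ := triv_of_pid (e.map ρ) (by rw [← Matrix.map_mul, he])
  obtain ⟨r', u', v', huv', hvu'⟩ := hT
  let α := algebraMap (Polynomial (IsLocalRing.ResidueField R))
    (FractionRing (Polynomial (IsLocalRing.ResidueField R)))
  obtain ⟨u, v, huv, hvu, huu⟩ := adjust π hs hu _ u' v' huv' hvu' (u0.map α) (v0.map α)
    (by rw [← Matrix.map_mul, h0]; ext i j; simp [hπ, ρ, α])
    (by rw [← Matrix.map_mul, h0']; simp [Matrix.map_one])
  have hsurj : Function.Surjective ρ := Polynomial.map_surjective _ IsLocalRing.residue_surjective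
  choose lift hlift using hsurj
  let p0 : Matrix (Fin l) (Fin r) (Polynomial R) := u0.map lift
  have hp0 : p0.map ρ = u0 := by ext i j; simp [p0, hlift]
  have hp0' : (p0.map φ).map π = u.map π := by
    rw [huu, ← hp0]; ext i j; simp [φ, hπ, α, ρ]
  obtain ⟨Q, hQ, hdet⟩ := claim_two v u hvu p0 (by
    intro i j
    apply ker_pi π hπ
    have : (1 - v * p0.map φ).map π = 0 := by
      rw [Matrix.map_sub _ (fun a b => map_sub _ a b), Matrix.map_mul, hp0', ← Matrix.map_mul, hvu, sub_self]
    exact congrFun (congrFun this i) j)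
  set M := v * (p0 + Q).map φ with hM
  let P := e * (p0 + Q)
  have hve : v * e.map φ = v := by rw [← huv, ← Matrix.mul_assoc, hvu, Matrix.one_mul]
  have hvP : v * P.map φ = M := by
    rw [Matrix.map_mul, ← Matrix.mul_assoc, hve]
  have heP : e * P = P := by simp only [P]; rw [← Matrix.mul_assoc, he]
  have hPu : P.map φ = u * M := by
    rw [← hvP, ← Matrix.mul_assoc, huv, ← Matrix.map_mul, heP]
  have hinj : Function.Injective φ := algMap_inj
  -- monic multiple
  obtain ⟨h, Y, hh, hY⟩ := clear_denoms (R := R) (M⁻¹ * v)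
  have hPY : P * Y = h • e := by
    apply Matrix.map_injective hinj
    change (P * Y).map φ = (h • e).map φ
    rw [Matrix.map_mul, hPu, hY, Matrix.mul_smul, Matrix.mul_assoc, ← Matrix.mul_assoc M,
      Matrix.mul_nonsing_inv _ hdet, Matrix.one_mul, huv]
    ext i j; simp [φ]
  let eL : (Fin l → Polynomial R) →ₗ[R] (Fin l → Polynomial R) := e.mulVecLin.restrictScalars R
  let PL : (Fin r → Polynomial R) →ₗ[R] (Fin l → Polynomial R) := P.mulVecLin.restrictScalars R
  have heL : ∀ y, eL y = e *ᵥ y := fun y => rfl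
  have hPL : ∀ y, PL y = P *ᵥ y := fun y => rfl
  let W : Submodule R (Fin l → Polynomial R) :=
    (Submodule.pi Set.univ (fun _ => Polynomial.degreeLT R h.natDegree)).map eL
  have hWfg : W.FG := (Submodule.fg_pi fun _ => degreeLT_fg _).map _
  have ha : LinearMap.range eL ≤ LinearMap.range PL ⊔ m • LinearMap.range eL := by
    rintro _ ⟨y, rfl⟩
    let z : Fin r → Polynomial R := fun i => lift ((v0 *ᵥ (fun j => ρ (y j))) i)
    have hz : (fun i => ρ (z i)) = v0 *ᵥ (fun j => ρ (y j)) := by ext1 i; simp [z, hlift]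
    have hmv : ∀ {a b : ℕ} (A : Matrix (Fin a) (Fin b) (Polynomial R)) (x : Fin b → Polynomial R) i,
        ρ ((A *ᵥ x) i) = ((A.map ρ) *ᵥ (fun j => ρ (x j))) i := by
      intro a b A x i
      exact RingHom.map_mulVec ρ A x i
    have hw : eL y - (p0 + Q) *ᵥ z ∈ m • (⊤ : Submodule R (Fin l → Polynomial R)) := by
      apply mem_smul_of_map_zero
      intro i
      change ρ ((eL y - (p0 + Q) *ᵥ z) i) = 0
      have hQ' : Q.map ρ = 0 := hQ
      rw [Pi.sub_apply, map_sub, heL, hmv, hmv, Matrix.map_add _ (fun a b => map_add _ a b), hp0, hQ',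
        add_zero, hz, Matrix.mulVec_mulVec, h0, sub_self]
    have hw2 := Submodule.mem_map_of_mem (f := eL) hw
    rw [Submodule.map_smul'', ← LinearMap.range_eq_map] at hw2
    have e1 : eL y = PL z + eL (eL y - (p0 + Q) *ᵥ z) := by
      rw [heL, heL, hPL, Matrix.mulVec_sub, Matrix.mulVec_mulVec, Matrix.mulVec_mulVec, he]
      simp only [P]; abel
    rw [e1]
    exact Submodule.add_mem_sup ⟨_, rfl⟩ hw2
  have hc : LinearMap.range eL ≤ LinearMap.range PL ⊔ W := by
    rintro _ ⟨y, rfl⟩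
    have hy : y = h • (fun i => y i /ₘ h) + (fun i => y i %ₘ h) := by
      ext1 i
      have := modByMonic_add_div (y i) h
      simp only [Pi.add_apply, Pi.smul_apply, smul_eq_mul]
      rw [add_comm]; exact this.symm
    have e1 : eL y = PL (Y *ᵥ (fun i => y i /ₘ h)) + eL (fun i => y i %ₘ h) := by
      conv_lhs => rw [hy]
      rw [map_add, hPL, Matrix.mulVec_mulVec, hPY, heL, Matrix.mulVec_smul, Matrix.smul_mulVec]
    rw [e1]
    refine Submodule.add_mem_sup ⟨_, rfl⟩ ⟨_, ?_, rfl⟩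
    intro i _
    change y i %ₘ h ∈ Polynomial.degreeLT R h.natDegree
    rw [mem_degreeLT, ← degree_eq_natDegree hh.ne_zero]
    exact degree_modByMonic_lt _ hh
  have hWN : W ≤ LinearMap.range PL := by
    refine Submodule.le_of_le_smul_of_le_jacobson_bot hWfg
      (IsLocalRing.maximalIdeal_le_jacobson ⊥) ?_
    calc W ≤ LinearMap.range eL := LinearMap.map_le_range
      _ ≤ _ := ha
      _ ≤ LinearMap.range PL ⊔ m • (LinearMap.range PL ⊔ W) :=
        sup_le_sup_left (Submodule.smul_mono le_rfl hc) _
      _ ≤ LinearMap.range PL ⊔ m • W := by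
        rw [Submodule.smul_sup]
        exact sup_le le_sup_left (sup_le (Submodule.smul_le_right.trans le_sup_left) le_sup_right)
  have hle : LinearMap.range eL ≤ LinearMap.range PL := hc.trans (sup_le le_rfl hWN)
  have hcol : ∀ j, ∃ z, PL z = eL (Pi.single j 1) := fun j => hle ⟨_, rfl⟩
  choose z hz using hcol
  let w : Matrix (Fin r) (Fin l) (Polynomial R) := Matrix.of fun i j => z j i
  have hPw : P * w = e := by
    ext1 i j
    have := congrFun (hz j) i
    rw [hPL, heL, Matrix.mulVec_single_one] at this
    exact this
  refine ⟨r, P, w, hPw, ?_⟩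
  apply Matrix.map_injective hinj
  change (w * P).map φ = (1 : Matrix (Fin r) (Fin r) (Polynomial R)).map φ
  have h5 : M * w.map φ = v := by
    rw [← hvP, Matrix.mul_assoc, ← Matrix.map_mul, hPw, hve]
  have h6 : M * (w * P).map φ = M := by
    rw [Matrix.map_mul, ← Matrix.mul_assoc, h5, hvP]
  have h7 := congrArg (fun A => M⁻¹ * A) h6
  simp only [← Matrix.mul_assoc, Matrix.nonsing_inv_mul _ hdet, Matrix.one_mul] at h7
  rw [h7]; simp [Matrix.map_one]

end Horrocks

section Patching

/-- conjugacy of matrices -/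
def Cj {A : Type*} [CommRing A] {l : ℕ} (M N : Matrix (Fin l) (Fin l) A) : Prop :=
  ∃ E E' : Matrix (Fin l) (Fin l) A, E * E' = 1 ∧ E' * E = 1 ∧ M * E = E * N

lemma Cj.trans {A : Type*} [CommRing A] {l : ℕ} {M N P : Matrix (Fin l) (Fin l) A}
    (h : Cj M N) (h' : Cj N P) : Cj M P := by
  obtain ⟨E, E', h1, h2, h3⟩ := h
  obtain ⟨G, G', h4, h5, h6⟩ := h'
  refine ⟨E * G, G' * E', ?_, ?_, ?_⟩
  · rw [Matrix.mul_assoc, ← Matrix.mul_assoc G, h4, Matrix.one_mul, h1]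
  · rw [Matrix.mul_assoc, ← Matrix.mul_assoc E', h2, Matrix.one_mul, h5]
  · rw [← Matrix.mul_assoc, h3, Matrix.mul_assoc, h6, Matrix.mul_assoc]

lemma Cj.triv {A : Type*} [CommRing A] {l : ℕ} {M N : Matrix (Fin l) (Fin l) A}
    (h : Cj M N) (h' : Triv N) : Triv M := by
  obtain ⟨E, E', h1, h2, h3⟩ := h
  obtain ⟨r, u, v, h4, h5⟩ := h'
  refine ⟨r, E * u, v * E', ?_, ?_⟩
  · calc E * u * (v * E') = E * (u * v) * E' := by simp only [Matrix.mul_assoc]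
      _ = M * (E * E') := by rw [h4, ← h3, Matrix.mul_assoc]
      _ = M := by rw [h1, Matrix.mul_one]
  · rw [Matrix.mul_assoc, ← Matrix.mul_assoc E', h2, Matrix.one_mul, h5]

/-- The substitution `X ↦ b X`. -/
noncomputable def sc {A : Type*} [CommRing A] (b : A) : Polynomial A →+* Polynomial A :=
  Polynomial.compRingHom (Polynomial.C b * Polynomial.X)

lemma sc_dvd {A : Type*} [CommRing A] (b c : A) (p : Polynomial A) :
    Polynomial.C (b - c) ∣ sc b p - sc c p := by
  have h := Polynomial.sub_dvd_eval_sub (Polynomial.C b * Polynomial.X)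
    (Polynomial.C c * Polynomial.X) (p.map Polynomial.C)
  rw [Polynomial.eval_map, Polynomial.eval_map] at h
  refine dvd_trans ⟨Polynomial.X, ?_⟩ h
  rw [Polynomial.C_sub]; ring

lemma sc_map {A B : Type*} [CommRing A] [CommRing B] (f : A →+* B) (b : A) (p : Polynomial A) :
    (sc b p).map f = sc (f b) (p.map f) := by
  simp [sc, Polynomial.map_comp]

lemma sc_one {A : Type*} [CommRing A] (p : Polynomial A) : sc 1 p = p := by
  simp [sc]

lemma sc_zero {A : Type*} [CommRing A] (p : Polynomial A) : sc 0 p = Polynomial.C (p.eval 0) := by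
  simp [sc]

lemma sc_C {A : Type*} [CommRing A] (b a : A) : sc b (Polynomial.C a) = Polynomial.C a := by
  simp [sc]

lemma clear_poly {A Am : Type*} [CommRing A] [CommRing Am] [Algebra A Am] (S : Submonoid A)
    [IsLocalization S Am] {l : ℕ} (g : Matrix (Fin l) (Fin l) (Polynomial Am)) :
    ∃ s ∈ S, ∃ G : Matrix (Fin l) (Fin l) (Polynomial A),
      G.map (Polynomial.mapRingHom (algebraMap A Am)) = Polynomial.C (algebraMap A Am s) • g := by
  letI : Algebra (Polynomial A) (Polynomial Am) := Polynomial.algebra A Am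
  have := Polynomial.isLocalization S Am
  obtain ⟨⟨b, hb⟩, hbb⟩ := IsLocalization.exist_integer_multiples_of_finite
    (S.map (Polynomial.C : A →+* Polynomial A)) (fun ij : Fin l × Fin l => g ij.1 ij.2)
  obtain ⟨s, hs, rfl⟩ := hb
  choose x hx using hbb
  refine ⟨s, hs, Matrix.of fun i j => x (i, j), ?_⟩
  ext1 i j
  have := hx (i, j)
  rw [Algebra.smul_def] at this
  simpa [Polynomial.algebraMap_def] using this

lemma local_lift {A Am : Type*} [CommRing A] [CommRing Am] [IsDomain Am] [Algebra A Am]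
    (S : Submonoid A) [IsLocalization S Am] {l : ℕ}
    (g g' : Matrix (Fin l) (Fin l) (Polynomial Am)) (hgg : g * g' = 1) :
    ∃ s ∈ S, ∀ b c : A, s ∣ b - c → ∃ E : Matrix (Fin l) (Fin l) (Polynomial A),
      E.map (Polynomial.mapRingHom (algebraMap A Am)) =
        g.map (sc (algebraMap A Am b)) * g'.map (sc (algebraMap A Am c)) := by
  obtain ⟨s1, hs1, G, hG⟩ := clear_poly S g
  obtain ⟨s2, hs2, G', hG'⟩ := clear_poly S g'
  refine ⟨s1 * s2, S.mul_mem hs1 hs2, fun b c hbc => ?_⟩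
  have hd : ∀ i j, ∃ q, sc b (G i j) - sc c (G i j) = Polynomial.C (s1 * s2) * q := fun i j =>
    dvd_trans (map_dvd Polynomial.C hbc) (sc_dvd b c (G i j))
  choose H hH using hd
  set ι := Polynomial.mapRingHom (algebraMap A Am) with hι
  let Hm : Matrix (Fin l) (Fin l) (Polynomial A) := Matrix.of H
  have hscm : ∀ (a : A) (M : Matrix (Fin l) (Fin l) (Polynomial A)),
      (M.map (sc a)).map ι = (M.map ι).map (sc (algebraMap A Am a)) := by
    intro a M; ext1 i j
    simp only [Matrix.map_apply, hι, Polynomial.coe_mapRingHom, sc_map]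
  have hsm : ∀ (a s : Am) (M : Matrix (Fin l) (Fin l) (Polynomial Am)),
      (Polynomial.C s • M).map (sc a) = Polynomial.C s • M.map (sc a) := by
    intro a s M; ext1 i j
    simp only [Matrix.map_apply, Matrix.smul_apply, smul_eq_mul, map_mul, sc_C]
  by_cases hz : algebraMap A Am (s1 * s2) = 0
  · have hu := IsLocalization.map_units Am (⟨s1 * s2, S.mul_mem hs1 hs2⟩ : S)
    rw [show algebraMap A Am ((⟨s1 * s2, S.mul_mem hs1 hs2⟩ : S) : A) = 0 from hz] at hu
    exact absurd hu not_isUnit_zero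
  refine ⟨1 + Hm * G'.map (sc c), ?_⟩
  have h1 : Polynomial.C (algebraMap A Am s1) • (g.map (sc (algebraMap A Am b)) -
      g.map (sc (algebraMap A Am c))) = Polynomial.C (algebraMap A Am (s1 * s2)) • Hm.map ι := by
    rw [smul_sub, ← hsm, ← hsm, ← hG, ← hscm, ← hscm]
    ext1 i j
    have := congrArg ι (hH i j)
    simp only [map_sub, map_mul] at this
    simp only [Matrix.sub_apply, Matrix.map_apply, Matrix.smul_apply, smul_eq_mul, this, Hm, Matrix.of_apply]
    simp [hι]
  have h2 : (G'.map (sc c)).map ι = Polynomial.C (algebraMap A Am s2) • g'.map (sc (algebraMap A Am c)) := by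
    rw [hscm, hG', hsm]
  have h3 : Hm.map ι * (G'.map (sc c)).map ι = (g.map (sc (algebraMap A Am b)) -
      g.map (sc (algebraMap A Am c))) * g'.map (sc (algebraMap A Am c)) := by
    have hne : Polynomial.C (algebraMap A Am (s1 * s2)) ≠ 0 := by simpa using hz
    have h4 : Polynomial.C (algebraMap A Am (s1 * s2)) • (Hm.map ι * (G'.map (sc c)).map ι) =
      Polynomial.C (algebraMap A Am (s1 * s2)) • ((g.map (sc (algebraMap A Am b)) -
      g.map (sc (algebraMap A Am c))) * g'.map (sc (algebraMap A Am c))) := by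
      rw [← Matrix.smul_mul, ← h1, h2, Matrix.mul_smul, Matrix.smul_mul, smul_smul, map_mul, map_mul, mul_comm]
    ext1 i j
    have := congrFun (congrFun h4 i) j
    simp only [Matrix.smul_apply, smul_eq_mul] at this
    exact mul_left_cancel₀ hne this
  have h5 : (1 + Hm * G'.map (sc c)).map ι = 1 + Hm.map ι * (G'.map (sc c)).map ι := by
    rw [Matrix.map_add _ (fun a b => map_add _ a b), Matrix.map_mul]
    simp [Matrix.map_one]
  have h6 : g.map (sc (algebraMap A Am c)) * g'.map (sc (algebraMap A Am c)) = 1 := by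
    rw [← Matrix.map_mul, hgg]; simp [Matrix.map_one]
  rw [h5, h3, Matrix.sub_mul, h6, add_sub_cancel]

lemma local_conj {A Am : Type*} [CommRing A] [CommRing Am] [IsDomain Am] [Algebra A Am]
    (S : Submonoid A) [IsLocalization S Am] (hinj : Function.Injective (algebraMap A Am)) {l : ℕ}
    (e : Matrix (Fin l) (Fin l) (Polynomial A))
    (g g' : Matrix (Fin l) (Fin l) (Polynomial Am)) (N : Matrix (Fin l) (Fin l) Am)
    (h1 : g * g' = 1) (h2 : g' * g = 1)
    (h3 : e.map (Polynomial.mapRingHom (algebraMap A Am)) * g = g * N.map Polynomial.C) :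
    ∃ s ∈ S, ∀ b c : A, s ∣ b - c → Cj (e.map (sc b)) (e.map (sc c)) := by
  obtain ⟨s, hs, H⟩ := local_lift S g g' h1
  refine ⟨s, hs, fun b c hbc => ?_⟩
  obtain ⟨E, hE⟩ := H b c hbc
  obtain ⟨E', hE'⟩ := H c b (by rw [← neg_sub, dvd_neg]; exact hbc)
  set ι := Polynomial.mapRingHom (algebraMap A Am) with hι
  have hι_inj : Function.Injective ι := Polynomial.map_injective _ hinj
  have hscm : ∀ (a : A) (M : Matrix (Fin l) (Fin l) (Polynomial A)),
      (M.map (sc a)).map ι = (M.map ι).map (sc (algebraMap A Am a)) := by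
    intro a M; ext1 i j
    simp only [Matrix.map_apply, hι, Polynomial.coe_mapRingHom, sc_map]
  have k1 : ∀ a : Am, g.map (sc a) * g'.map (sc a) = 1 := by
    intro a; rw [← Matrix.map_mul, h1]; simp [Matrix.map_one]
  have k2 : ∀ a : Am, g'.map (sc a) * g.map (sc a) = 1 := by
    intro a; rw [← Matrix.map_mul, h2]; simp [Matrix.map_one]
  have k3 : ∀ a : Am, (e.map ι).map (sc a) * g.map (sc a) = g.map (sc a) * N.map Polynomial.C := by
    intro a; rw [← Matrix.map_mul, h3, Matrix.map_mul]
    congr 1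
    ext1 i j; simp [sc_C]
  have k4 : ∀ a : Am, g'.map (sc a) * (e.map ι).map (sc a) = N.map Polynomial.C * g'.map (sc a) := by
    intro a
    calc g'.map (sc a) * (e.map ι).map (sc a)
        = g'.map (sc a) * ((e.map ι).map (sc a) * g.map (sc a)) * g'.map (sc a) := by
          rw [Matrix.mul_assoc, Matrix.mul_assoc, k1, Matrix.mul_one]
      _ = _ := by rw [k3, ← Matrix.mul_assoc, k2, Matrix.one_mul]
  have one_map : (1 : Matrix (Fin l) (Fin l) (Polynomial A)).map ι = 1 := by simp [Matrix.map_one]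
  refine ⟨E, E', ?_, ?_, ?_⟩
  · apply Matrix.map_injective hι_inj
    change (E * E').map ι = (1 : Matrix (Fin l) (Fin l) (Polynomial A)).map ι
    rw [Matrix.map_mul, hE, hE', one_map, Matrix.mul_assoc, ← Matrix.mul_assoc (g'.map _), k2,
      Matrix.one_mul, k1]
  · apply Matrix.map_injective hι_inj
    change (E' * E).map ι = (1 : Matrix (Fin l) (Fin l) (Polynomial A)).map ι
    rw [Matrix.map_mul, hE, hE', one_map, Matrix.mul_assoc, ← Matrix.mul_assoc (g'.map _), k2,
      Matrix.one_mul, k1]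
  · apply Matrix.map_injective hι_inj
    change (e.map (sc b) * E).map ι = (E * e.map (sc c)).map ι
    rw [Matrix.map_mul, Matrix.map_mul, hE, hscm, hscm, ← Matrix.mul_assoc, k3, Matrix.mul_assoc,
      Matrix.mul_assoc, k4]

lemma conj_of_triv {B : Type*} [CommRing B] {l : ℕ} (e : Matrix (Fin l) (Fin l) (Polynomial B))
    (h : Triv e) (h' : Triv (1 - e)) (he : e * e = e) :
    ∃ (g g' : Matrix (Fin l) (Fin l) (Polynomial B)) (N : Matrix (Fin l) (Fin l) B),
      g * g' = 1 ∧ g' * g = 1 ∧ e * g = g * N.map Polynomial.C := by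
  let z : Polynomial B →+* Polynomial B := sc 0
  obtain ⟨r, u, v, h1, h2⟩ := h
  obtain ⟨r', u', v', h1', h2'⟩ := h'
  have heu : e * u = u := by rw [← h1, Matrix.mul_assoc, h2, Matrix.mul_one]
  have heu' : e * u' = 0 := by
    have : (1 - e) * u' = u' := by rw [← h1', Matrix.mul_assoc, h2', Matrix.mul_one]
    rw [Matrix.sub_mul, Matrix.one_mul, sub_eq_self] at this
    exact this
  have hve : v * e = v := by rw [← h1, ← Matrix.mul_assoc, h2, Matrix.one_mul]
  have hv'e : v' * e = 0 := by
    have : v' * (1 - e) = v' := by rw [← h1', ← Matrix.mul_assoc, h2', Matrix.one_mul]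
    rw [Matrix.mul_sub, Matrix.mul_one, sub_eq_self] at this
    exact this
  have hvu' : v * u' = 0 := by rw [← hve, Matrix.mul_assoc, heu', Matrix.mul_zero]
  have hv'u : v' * u = 0 := by rw [← heu, ← Matrix.mul_assoc, hv'e, Matrix.zero_mul]
  have z1 : v.map z * u.map z = 1 := by rw [← Matrix.map_mul, h2]; simp [Matrix.map_one]
  have z2 : v'.map z * u'.map z = 1 := by rw [← Matrix.map_mul, h2']; simp [Matrix.map_one]
  have z3 : v.map z * u'.map z = 0 := by rw [← Matrix.map_mul, hvu']; simp
  have z4 : v'.map z * u.map z = 0 := by rw [← Matrix.map_mul, hv'u]; simp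
  have z5 : u.map z * v.map z = e.map z := by rw [← Matrix.map_mul, h1]
  have z6 : u'.map z * v'.map z = 1 - e.map z := by
    rw [← Matrix.map_mul, h1', Matrix.map_sub _ (fun a b => map_sub _ a b)]; simp [Matrix.map_one]
  have aux : ∀ {a b c d f : ℕ} (P : Matrix (Fin a) (Fin b) (Polynomial B)) (Q : Matrix (Fin b) (Fin c) (Polynomial B))
      (R : Matrix (Fin c) (Fin d) (Polynomial B)) (S : Matrix (Fin d) (Fin f) (Polynomial B)),
      P * Q * (R * S) = P * (Q * R) * S := by
    intros; simp only [Matrix.mul_assoc]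
  refine ⟨u * v.map z + u' * v'.map z, u.map z * v + u'.map z * v', e.map (Polynomial.eval 0), ?_, ?_, ?_⟩
  · rw [Matrix.add_mul, Matrix.mul_add, Matrix.mul_add, aux, aux, aux, aux, z1, z2, z3, z4]
    simp only [Matrix.mul_one, Matrix.mul_zero, Matrix.zero_mul, add_zero, zero_add]
    rw [h1, h1', add_sub_cancel]
  · rw [Matrix.add_mul, Matrix.mul_add, Matrix.mul_add, aux, aux, aux, aux, h2, h2', hvu', hv'u]
    simp only [Matrix.mul_one, Matrix.mul_zero, Matrix.zero_mul, add_zero, zero_add]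
    rw [z5, z6, add_sub_cancel]
  · have hN : (e.map (Polynomial.eval 0)).map Polynomial.C = e.map z := by
      ext1 i j; simp [z, sc_zero]
    rw [hN, ← z5, Matrix.mul_add, ← Matrix.mul_assoc, ← Matrix.mul_assoc, heu, heu', Matrix.zero_mul,
      add_zero, Matrix.add_mul, aux, aux, z1, z4]
    simp

lemma patch {A : Type*} [CommRing A] {l : ℕ} (e : Matrix (Fin l) (Fin l) (Polynomial A))
    (H : ∀ m : Ideal A, m.IsMaximal → ∃ s ∉ m, ∀ b c : A, s ∣ b - c → Cj (e.map (sc b)) (e.map (sc c))) :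
    Cj (e.map (sc 1)) (e.map (sc 0)) := by
  let I : Ideal A :=
    { carrier := {s | ∀ b c : A, s ∣ b - c → Cj (e.map (sc b)) (e.map (sc c))}
      zero_mem' := by
        intro b c h
        have : b = c := sub_eq_zero.1 (zero_dvd_iff.1 h)
        subst this
        exact ⟨1, 1, by simp, by simp, by simp⟩
      add_mem' := by
        rintro s t hs ht b c ⟨d, hd⟩
        exact (hs b (b - s * d) ⟨d, by ring⟩).trans (ht _ _ ⟨d, by linear_combination hd⟩)
      smul_mem' := by
        intro a s hs b c h
        exact hs b c (dvd_trans (Dvd.intro_left a rfl) h) }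
  have hI : I = ⊤ := by
    by_contra hne
    obtain ⟨m, hm, hle⟩ := Ideal.exists_le_maximal I hne
    obtain ⟨s, hs, h⟩ := H m hm
    exact hs (hle h)
  have h1 : (1 : A) ∈ I := by rw [hI]; trivial
  exact h1 1 0 (one_dvd _)

end Patching

section QS

universe uu

lemma triv_equiv {A B : Type*} [CommRing A] [CommRing B] (φ : A ≃+* B) {l : ℕ}
    {e : Matrix (Fin l) (Fin l) A} (h : Triv (e.map φ.toRingHom)) : Triv e := by
  have h2 := h.map φ.symm.toRingHom
  convert h2
  ext1 i j
  simp

lemma idem_map {A B : Type*} [CommRing A] [CommRing B] (φ : A →+* B) {l : ℕ}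
    {e : Matrix (Fin l) (Fin l) A} (h : e * e = e) : e.map φ * e.map φ = e.map φ := by
  rw [← Matrix.map_mul, h]

lemma idem_compl {A : Type*} [CommRing A] {l : ℕ}
    {e : Matrix (Fin l) (Fin l) A} (h : e * e = e) : (1 - e) * (1 - e) = 1 - e := by
  rw [Matrix.mul_sub, Matrix.sub_mul, Matrix.sub_mul, h]; simp

lemma const_unit {K B T : Type*} [Field K] [CommRing B] [CommRing T] [Algebra (Polynomial B) T]
    [IsLocalization (monicS B) T] (η : K →+* B) (p : Polynomial K) (hp : p ≠ 0) :
    IsUnit (algebraMap (Polynomial B) T (p.map η)) := by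
  have hc : p.leadingCoeff ≠ 0 := by simpa using hp
  have h1 : p = Polynomial.C p.leadingCoeff * (p * Polynomial.C p.leadingCoeff⁻¹) := by
    rw [mul_comm p, ← mul_assoc, ← Polynomial.C_mul, mul_inv_cancel₀ hc]; simp
  have h2 : (p * Polynomial.C p.leadingCoeff⁻¹).Monic := Polynomial.monic_mul_leadingCoeff_inv hp
  rw [h1, Polynomial.map_mul, map_mul, Polynomial.map_C]
  refine IsUnit.mul (((hc.isUnit.map η).map Polynomial.C).map _) ?_
  exact IsLocalization.map_units T (⟨_, h2.map η⟩ : monicS B)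

lemma horrocks_hyp {K : Type uu} [Field K] {n : ℕ} {B T : Type*} [CommRing B] [CommRing T]
    [Algebra (Polynomial B) T] [IsLocalization (monicS B) T]
    (α : MvPolynomial (Fin n) K →+* B)
    (IH : ∀ (K : Type uu) [Field K] (l : ℕ) (e : Matrix (Fin l) (Fin l) (MvPolynomial (Fin n) K)),
      e * e = e → Triv e) {l : ℕ}
    (e : Matrix (Fin l) (Fin l) (Polynomial (MvPolynomial (Fin n) K))) (he : e * e = e) :
    Triv ((e.map (Polynomial.mapRingHom α)).map (algebraMap (Polynomial B) T)) := by
  let L := FractionRing (Polynomial K)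
  let κ0 : Polynomial K →+* T :=
    (algebraMap (Polynomial B) T).comp (Polynomial.mapRingHom (α.comp MvPolynomial.C))
  have hκ0 : ∀ y : nonZeroDivisors (Polynomial K), IsUnit (κ0 y) := by
    intro y
    exact const_unit (T := T) (α.comp MvPolynomial.C) y (nonZeroDivisors.coe_ne_zero y)
  let κ : L →+* T := IsLocalization.lift hκ0
  let θ : Polynomial (MvPolynomial (Fin n) K) →+* MvPolynomial (Fin n) L :=
    Polynomial.eval₂RingHom
      (MvPolynomial.map ((algebraMap (Polynomial K) L).comp Polynomial.C))
      (MvPolynomial.C (algebraMap (Polynomial K) L Polynomial.X))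
  let ψ : MvPolynomial (Fin n) L →+* T :=
    MvPolynomial.eval₂Hom κ
      (fun i => algebraMap (Polynomial B) T (Polynomial.C (α (MvPolynomial.X i))))
  have hcomp : ψ.comp θ = (algebraMap (Polynomial B) T).comp (Polynomial.mapRingHom α) := by
    apply Polynomial.ringHom_ext'
    · apply MvPolynomial.ringHom_ext
      · intro a
        simp [ψ, θ, κ, κ0]
      · intro i
        simp [ψ, θ, κ, κ0]
    · simp [ψ, θ, κ, κ0]
  have h := (IH L l (e.map θ) (idem_map θ he)).map ψ
  convert h using 1
  ext1 i j
  exact (congrArg (fun φ : _ →+* _ => φ (e i j)) hcomp).symm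

theorem qs_step {K : Type uu} [Field K] {n : ℕ}
    (IH : ∀ (K : Type uu) [Field K] (l : ℕ) (e : Matrix (Fin l) (Fin l) (MvPolynomial (Fin n) K)),
      e * e = e → Triv e) {l : ℕ}
    (e : Matrix (Fin l) (Fin l) (Polynomial (MvPolynomial (Fin n) K))) (he : e * e = e) :
    Triv e := by
  have key : Cj (e.map (sc 1)) (e.map (sc 0)) := by
    apply patch
    intro m hm
    let Am := Localization.AtPrime m
    let α := algebraMap (MvPolynomial (Fin n) K) Am
    let T := Localization (monicS Am)
    have hd : IsDomain Am := IsLocalization.isDomain_localization m.primeCompl_le_nonZeroDivisors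
    have t1 : Triv (e.map (Polynomial.mapRingHom α)) :=
      horrocks (T := T) _ (idem_map _ he) (horrocks_hyp α IH e he)
    have t2 : Triv ((1 - e).map (Polynomial.mapRingHom α)) :=
      horrocks (T := T) _ (idem_map _ (idem_compl he)) (horrocks_hyp α IH _ (idem_compl he))
    have t3 : (1 - e).map (Polynomial.mapRingHom α) = 1 - e.map (Polynomial.mapRingHom α) := by
      rw [Matrix.map_sub _ (fun a b => map_sub _ a b)]; simp [Matrix.map_one]
    rw [t3] at t2
    obtain ⟨g, g', N, h1, h2, h3⟩ := conj_of_triv _ t1 t2 (idem_map _ he)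
    exact local_conj m.primeCompl
      (IsLocalization.injective Am m.primeCompl_le_nonZeroDivisors) e g g' N h1 h2 h3
  have h1 : e.map (sc 1) = e := by ext1 i j; simp [sc_one]
  have h0 : e.map (sc 0) = (e.map (Polynomial.evalRingHom 0)).map (Polynomial.C : _ →+* _) := by
    ext1 i j; simp [sc_zero]
  rw [h1, h0] at key
  exact key.triv ((IH K l _ (idem_map _ he)).map Polynomial.C)

theorem quillen_suslin (n : ℕ) : ∀ (K : Type uu) [Field K] (l : ℕ)
    (e : Matrix (Fin l) (Fin l) (MvPolynomial (Fin n) K)), e * e = e → Triv e := by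
  induction n with
  | zero =>
    intro K _ l e he
    apply triv_equiv (MvPolynomial.isEmptyRingEquiv K (Fin 0))
    exact triv_of_pid _ (idem_map _ he)
  | succ n IH =>
    intro K _ l e he
    apply triv_equiv (MvPolynomial.finSuccEquiv K n).toRingEquiv
    exact qs_step IH _ (idem_map _ he)

end QS

section Final

lemma cramer_field {L : Type*} [Field L] {k l : ℕ} (M : Matrix (Fin l) (Fin l) L)
    (r c : Fin k → Fin l) (hd : (M.submatrix r c).det ≠ 0)
    (hz : ∀ r' c' : Fin k ⊕ Unit → Fin l, (M.submatrix r' c').det = 0) :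
    (M.submatrix r c).det • M =
      M.submatrix id c * (M.submatrix r c).adjugate * M.submatrix r id := by
  set A := M.submatrix r c with hA
  have hu : IsUnit A.det := hd.isUnit
  let _ : Invertible A := Matrix.invertibleOfIsUnitDet A hu
  ext i j
  have h := hz (Sum.elim r (fun _ => i)) (Sum.elim c (fun _ => j))
  have hb : M.submatrix (Sum.elim r (fun _ : Unit => i)) (Sum.elim c (fun _ : Unit => j)) =
      Matrix.fromBlocks A (M.submatrix r (fun _ => j)) (M.submatrix (fun _ => i) c)
        (M.submatrix (fun _ => i) (fun _ => j)) := by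
    ext a b
    rcases a with a | a <;> rcases b with b | b <;> rfl
  rw [hb, Matrix.det_fromBlocks₁₁, Matrix.det_unique (n := Unit)] at h
  have h' := (mul_eq_zero.1 h).resolve_left hd
  rw [Matrix.invOf_eq_nonsing_inv, Matrix.inv_def, Matrix.mul_smul, Matrix.smul_mul] at h'
  simp only [Matrix.sub_apply, Matrix.smul_apply, smul_eq_mul, Matrix.submatrix_apply] at h'
  have e1 : (M.submatrix (fun _ : Unit => i) c * A.adjugate * M.submatrix r (fun _ : Unit => j))
      default default = (M.submatrix id c * A.adjugate * M.submatrix r id) i j := by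
    simp only [Matrix.mul_apply, Matrix.submatrix_apply, id]
  rw [e1, sub_eq_zero, Ring.inverse_eq_inv'] at h'
  rw [Matrix.smul_apply, smul_eq_mul, h', mul_inv_cancel_left₀ hd]

lemma minors_zero {S : Type*} [CommRing S] {k l : ℕ} (M : Matrix (Fin l) (Fin l) S)
    (hz : ∀ p ∈ minorsSet M (k + 1), p = 0) (r' c' : Fin k ⊕ Unit → Fin l) :
    (M.submatrix r' c').det = 0 := by
  by_cases hr : Function.Injective r'
  · by_cases hc : Function.Injective c'
    · let ε : Fin (k + 1) ≃ Fin k ⊕ Unit :=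
        finSumFinEquiv.symm.trans (Equiv.sumCongr (Equiv.refl _) (Equiv.ofUnique (Fin 1) Unit))
      rw [← Matrix.det_submatrix_equiv_self ε]
      exact hz _ ⟨⟨r' ∘ ε, hr.comp ε.injective⟩, ⟨c' ∘ ε, hc.comp ε.injective⟩, rfl⟩
    · simp only [Function.Injective, not_forall] at hc
      obtain ⟨a, b, hab, hne⟩ := hc
      exact Matrix.det_zero_of_column_eq hne (fun i => by simp [hab])
  · simp only [Function.Injective, not_forall] at hr
    obtain ⟨a, b, hab, hne⟩ := hr
    exact Matrix.det_zero_of_row_eq hne (by ext i; simp [hab])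

lemma cramer {S : Type*} [CommRing S] [IsDomain S] {k l : ℕ} (M : Matrix (Fin l) (Fin l) S)
    (r c : Fin k → Fin l) (hd : (M.submatrix r c).det ≠ 0)
    (hz : ∀ p ∈ minorsSet M (k + 1), p = 0) :
    (M.submatrix r c).det • M =
      M.submatrix id c * (M.submatrix r c).adjugate * M.submatrix r id := by
  let φ := algebraMap S (FractionRing S)
  have hφ : Function.Injective φ := IsFractionRing.injective S (FractionRing S)
  have hdet : ∀ {m : Type} [Fintype m] [DecidableEq m] (N : Matrix m m S),
      (N.map φ).det = φ N.det := fun N => (RingHom.map_det φ N).symm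
  have h := cramer_field (M.map φ) r c
    (by rw [Matrix.submatrix_map, hdet]; simpa using fun h => hd (hφ (by simpa using h)))
    (by intro r' c'; rw [Matrix.submatrix_map, hdet, minors_zero M hz, map_zero])
  apply Matrix.map_injective hφ
  change ((M.submatrix r c).det • M).map φ = (M.submatrix id c * (M.submatrix r c).adjugate * M.submatrix r id).map φ
  rw [Matrix.map_mul, Matrix.map_mul, ← Matrix.submatrix_map, ← Matrix.submatrix_map]
  have h2 : ((M.submatrix r c).adjugate).map φ = ((M.map φ).submatrix r c).adjugate := by
    have := RingHom.map_adjugate φ (M.submatrix r c)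
    simpa [Matrix.submatrix_map] using this
  rw [h2, ← h]
  rw [Matrix.submatrix_map, hdet]
  ext i j
  simp

lemma geninv {S : Type*} [CommRing S] [IsDomain S] {k l : ℕ} (M : Matrix (Fin l) (Fin l) S)
    (hz : ∀ p ∈ minorsSet M (k + 1), p = 0)
    (a : (Fin k ↪ Fin l) × (Fin k ↪ Fin l) → S)
    (ha : ∑ i, a i * (M.submatrix i.1 i.2).det = 1) :
    (∃ H, M * H * M = M) ∧ ∃ (d : S) (X : Matrix (Fin l) (Fin k) S) (Y : Matrix (Fin k) (Fin l) S),
      d ≠ 0 ∧ d • M = X * Y := by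
  classical
  constructor
  · let E : (Fin k ↪ Fin l) × (Fin k ↪ Fin l) → Matrix (Fin l) (Fin l) S := fun i =>
      if (M.submatrix i.1 i.2).det = 0 then 0 else
      (1 : Matrix (Fin l) (Fin l) S).submatrix id i.2 * (M.submatrix i.1 i.2).adjugate *
        (1 : Matrix (Fin l) (Fin l) S).submatrix i.1 id
    have hE : ∀ i, M * E i * M = (M.submatrix i.1 i.2).det • M := by
      intro i
      by_cases h0 : (M.submatrix i.1 i.2).det = 0
      · simp [E, h0]
      · rw [cramer M i.1 i.2 h0 hz]
        simp only [E, if_neg h0]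
        have e1 : M * (1 : Matrix (Fin l) (Fin l) S).submatrix id i.2 = M.submatrix id i.2 := by
          ext p q; simp [Matrix.mul_apply, Matrix.one_apply]
        have e2 : (1 : Matrix (Fin l) (Fin l) S).submatrix i.1 id * M = M.submatrix i.1 id := by
          ext p q; simp [Matrix.mul_apply, Matrix.one_apply]
        rw [← e1, ← e2]
        simp only [Matrix.mul_assoc]
    refine ⟨∑ i, a i • E i, ?_⟩
    rw [Matrix.mul_sum, Matrix.sum_mul]
    simp only [Matrix.mul_smul, Matrix.smul_mul, hE, smul_smul]
    rw [← Finset.sum_smul, ha, one_smul]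
  · obtain ⟨i, hi⟩ : ∃ i : (Fin k ↪ Fin l) × (Fin k ↪ Fin l), (M.submatrix i.1 i.2).det ≠ 0 := by
      by_contra hcon
      push Not at hcon
      simp [hcon] at ha
    exact ⟨_, _, _, hi, cramer M i.1 i.2 hi hz⟩

lemma split {S : Type*} [CommRing S] [IsDomain S] {k l : ℕ} (M : Matrix (Fin l) (Fin l) S)
    (hQ : ∀ e : Matrix (Fin l) (Fin l) S, e * e = e → Triv e)
    (H : Matrix (Fin l) (Fin l) S) (hH : M * H * M = M)
    (d : S) (X : Matrix (Fin l) (Fin k) S) (Y : Matrix (Fin k) (Fin l) S)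
    (hd : d ≠ 0) (hXY : d • M = X * Y) :
    ∃ U U' : Matrix (Fin l) (Fin l) S, U * U' = 1 ∧
      ∀ i j : Fin l, ¬ ((i : ℕ) < k) → (U * M) i j = 0 := by
  have he : (M * H) * (M * H) = M * H := by rw [← Matrix.mul_assoc, hH]
  obtain ⟨r, u, v, h1, h2⟩ := hQ _ he
  obtain ⟨r', u', v', h1', h2'⟩ := hQ _ (idem_compl he)
  set e := M * H with hedef
  have heu : e * u = u := by rw [← h1, Matrix.mul_assoc, h2, Matrix.mul_one]
  have heu' : e * u' = 0 := by
    have : (1 - e) * u' = u' := by rw [← h1', Matrix.mul_assoc, h2', Matrix.mul_one]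
    rw [Matrix.sub_mul, Matrix.one_mul, sub_eq_self] at this
    exact this
  have hve : v * e = v := by rw [← h1, ← Matrix.mul_assoc, h2, Matrix.one_mul]
  have hv'e : v' * e = 0 := by
    have : v' * (1 - e) = v' := by rw [← h1', ← Matrix.mul_assoc, h2', Matrix.one_mul]
    rw [Matrix.mul_sub, Matrix.mul_one, sub_eq_self] at this
    exact this
  have hvu' : v * u' = 0 := by rw [← hve, Matrix.mul_assoc, heu', Matrix.mul_zero]
  have hv'u : v' * u = 0 := by rw [← heu, ← Matrix.mul_assoc, hv'e, Matrix.zero_mul]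
  have hv'M : v' * M = 0 := by rw [← hH, ← Matrix.mul_assoc, hv'e, Matrix.zero_mul]
  have hrk : r ≤ k := by
    let φ := algebraMap S (FractionRing S)
    have hφ : Function.Injective φ := IsFractionRing.injective S (FractionRing S)
    have hφd : φ d ≠ 0 := by simpa using fun h => hd (hφ (by simpa using h))
    have h3 : (v * X) * (Y * H * u) = d • (1 : Matrix (Fin r) (Fin r) S) := by
      calc (v * X) * (Y * H * u) = v * (X * Y) * (H * u) := by simp only [Matrix.mul_assoc]
        _ = d • (v * ((M * H) * u)) := by
          rw [← hXY]; simp only [Matrix.mul_smul, Matrix.smul_mul, Matrix.mul_assoc]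
        _ = _ := by rw [← hedef, heu, h2]
    refine le_of_mul_one ((φ d)⁻¹ • (v * X).map φ) ((Y * H * u).map φ) ?_
    rw [Matrix.smul_mul, ← Matrix.map_mul, h3]
    ext i j
    by_cases hij : i = j
    · subst hij; simp [hφd]
    · simp [hij]
  have hW : Matrix.fromRows v v' * Matrix.fromCols u u' = 1 := by
    rw [Matrix.fromRows_mul_fromCols, h2, h2', hvu', hv'u, Matrix.fromBlocks_one]
  have hW' : Matrix.fromCols u u' * Matrix.fromRows v v' = 1 := by
    rw [Matrix.fromCols_mul_fromRows, h1, h1', add_sub_cancel]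
  let σ := (finSumFinEquiv : Fin r ⊕ Fin r' ≃ Fin (r + r')).symm
  have hV : (Matrix.fromRows v v').submatrix σ id * (Matrix.fromCols u u').submatrix id σ = 1 := by
    have := Matrix.submatrix_mul_equiv (Matrix.fromRows v v') (Matrix.fromCols u u') σ
      (Equiv.refl (Fin l)) σ
    rw [hW, Matrix.submatrix_one_equiv] at this
    exact this
  have hV' : (Matrix.fromCols u u').submatrix id σ * (Matrix.fromRows v v').submatrix σ id = 1 := by
    rw [Matrix.submatrix_mul_equiv, hW', Matrix.submatrix_id_id]
  obtain rfl : l = r + r' := le_antisymm (le_of_mul_one _ _ hV') (le_of_mul_one _ _ hV)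
  refine ⟨_, _, hV, fun i j hi => ?_⟩
  obtain ⟨i', rfl⟩ : ∃ i' : Fin r', i = Fin.natAdd r i' :=
    ⟨⟨i - r, by omega⟩, by ext; simp; omega⟩
  have := congrFun (congrFun hv'M i') j
  simpa [Matrix.mul_apply, σ] using this

theorem final_aux {K : Type*} [Field K] (n l : ℕ)
    (F : Matrix (Fin l) (Fin l) (MvPolynomial (Fin (n + 1)) K))
    (f : MvPolynomial (Fin (n + 1)) K)
    (hf : f ∈ MvPolynomial.supported K {t : Fin (n + 1) | (t : ℕ) ≠ 0})
    (k : ℕ)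
    (hJk : reducedIdeal F k 1 = ⊤)
    (hk1 : ∀ p ∈ minorsSet F (k + 1), (MvPolynomial.X 0 - f) ∣ p) :
    ∃ U G : Matrix (Fin l) (Fin l) (MvPolynomial (Fin (n + 1)) K),
      IsUnit U.det ∧
      (∀ i i' : Fin l, U i i' ∈ MvPolynomial.supported K {t : Fin (n + 1) | (t : ℕ) ≠ 0}) ∧
      U * F = Matrix.diagonal (fun i : Fin l =>
        if (i : ℕ) < k then 1 else MvPolynomial.X 0 - f) * G := by
  classical
  let j : MvPolynomial (Fin n) K →ₐ[K] MvPolynomial (Fin (n + 1)) K := MvPolynomial.rename Fin.succ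
  have hset : {t : Fin (n + 1) | (t : ℕ) ≠ 0} = Set.range Fin.succ := by
    ext t
    refine ⟨fun ht => ⟨t.pred (fun h => ht (by rw [h]; rfl)), by simp⟩, ?_⟩
    rintro ⟨y, rfl⟩
    simp
  have hj : ∀ p, j p ∈ MvPolynomial.supported K {t : Fin (n + 1) | (t : ℕ) ≠ 0} := by
    intro p
    rw [hset, MvPolynomial.mem_supported]
    refine subset_trans (Finset.coe_subset.2 (MvPolynomial.vars_rename Fin.succ p)) ?_
    intro x hx
    simp only [Finset.coe_image] at hx
    obtain ⟨y, -, rfl⟩ := hx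
    exact ⟨y, rfl⟩
  obtain ⟨f', rfl⟩ : ∃ f', j f' = f := by
    rw [hset, MvPolynomial.mem_supported] at hf
    exact (MvPolynomial.exists_rename_eq_of_vars_subset_range f Fin.succ (Fin.succ_injective n) hf)
  let s : MvPolynomial (Fin (n + 1)) K →ₐ[K] MvPolynomial (Fin n) K :=
    MvPolynomial.aeval (Fin.cases f' MvPolynomial.X)
  have hsj : ∀ p, s (j p) = p := by
    intro p
    have : s.comp j = AlgHom.id K _ := by
      apply MvPolynomial.algHom_ext
      intro i
      simp [s, j]
    exact congrArg (fun φ : _ →ₐ[K] _ => φ p) this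
  have hs0 : s (MvPolynomial.X 0 - j f') = 0 := by
    rw [map_sub, hsj]; simp [s]
  have hker : ∀ p, s p = 0 → (MvPolynomial.X 0 - j f') ∣ p := by
    intro p hp
    let I := Ideal.span {MvPolynomial.X 0 - j f'}
    have h1 : (Ideal.Quotient.mkₐ K I).comp (j.comp s) = Ideal.Quotient.mkₐ K I := by
      apply MvPolynomial.algHom_ext
      intro i
      refine Fin.cases ?_ (fun i => ?_) i
      · have : s (MvPolynomial.X 0) = f' := by simp [s]
        simp only [AlgHom.comp_apply, this, Ideal.Quotient.mkₐ_eq_mk]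
        symm
        rw [Ideal.Quotient.eq]
        exact Ideal.mem_span_singleton_self _
      · have : s (MvPolynomial.X i.succ) = MvPolynomial.X i := by simp [s]
        simp [this, j]
    have h2 := congrArg (fun φ : _ →ₐ[K] _ => φ p) h1
    simp only [AlgHom.comp_apply, hp, map_zero] at h2
    exact Ideal.mem_span_singleton.1 (Ideal.Quotient.eq_zero_iff_mem.1 h2.symm)
  let s' : MvPolynomial (Fin (n + 1)) K →+* MvPolynomial (Fin n) K := s.toRingHom
  let M := F.map s'
  have hdet : ∀ {m : ℕ} (r c : Fin m → Fin l), (M.submatrix r c).det = s (F.submatrix r c).det := by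
    intro m r c
    simp only [M, Matrix.submatrix_map]
    exact (RingHom.map_det s' _).symm
  have hz : ∀ p ∈ minorsSet M (k + 1), p = 0 := by
    rintro p ⟨r, c, rfl⟩
    obtain ⟨q, hq⟩ := hk1 _ ⟨r, c, rfl⟩
    rw [hdet, hq, map_mul, hs0, zero_mul]
  obtain ⟨a, ha⟩ : ∃ a : (Fin k ↪ Fin l) × (Fin k ↪ Fin l) → MvPolynomial (Fin n) K,
      ∑ i, a i * (M.submatrix i.1 i.2).det = 1 := by
    have h1 : (1 : MvPolynomial (Fin (n + 1)) K) ∈ Ideal.span (Set.range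
        (fun i : (Fin k ↪ Fin l) × (Fin k ↪ Fin l) => (F.submatrix i.1 i.2).det)) := by
      have : (1 : MvPolynomial (Fin (n + 1)) K) ∈ reducedIdeal F k 1 := by rw [hJk]; trivial
      refine Ideal.span_mono ?_ this
      intro v hv
      rw [Set.mem_setOf_eq, one_mul] at hv
      obtain ⟨r, c, rfl⟩ := hv
      exact ⟨(r, c), rfl⟩
    obtain ⟨a, ha⟩ := (Ideal.mem_span_range_iff_exists_fun).1 h1
    refine ⟨fun i => s (a i), ?_⟩
    simp only [hdet]
    have := congrArg s ha
    simpa only [map_sum, map_mul, map_one] using this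
  obtain ⟨⟨H, hH⟩, d, X, Y, hd, hXY⟩ := geninv M hz a ha
  obtain ⟨U, U', hU, hUM⟩ := split M (quillen_suslin n K l) H hH d X Y hd hXY
  let j' : MvPolynomial (Fin n) K →+* MvPolynomial (Fin (n + 1)) K := j.toRingHom
  have hdiv : ∀ i i' : Fin l, ∃ q, (U.map j' * F) i i' =
      (if (i : ℕ) < k then 1 else MvPolynomial.X 0 - j f') * q := by
    intro i i'
    by_cases hi : (i : ℕ) < k
    · simp [hi]
    · simp only [if_neg hi]
      apply hker
      rw [← hUM i i' hi]
      simp [Matrix.mul_apply, map_sum, j', M, s', hsj]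
  choose G hG using hdiv
  refine ⟨U.map j', Matrix.of G, ?_, ?_, ?_⟩
  · have : U.map j' * U'.map j' = 1 := by rw [← Matrix.map_mul, hU]; simp [Matrix.map_one]
    exact IsUnit.of_mul_eq_one _ (by rw [← Matrix.det_mul, this, Matrix.det_one])
  · intro i i'
    exact hj _
  · ext1 i i'
    rw [hG, Matrix.diagonal_mul]
    rfl

end Final

theorem statement8 {K : Type*} [Field K] (n : ℕ) (hn : 2 ≤ n) (l : ℕ)
    (F : Matrix (Fin l) (Fin l) (MvPolynomial (Fin n) K))
    (f : MvPolynomial (Fin n) K)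
    (hf : f ∈ MvPolynomial.supported K {t : Fin n | (t : ℕ) ≠ 0})
    (hdvd : (MvPolynomial.X (⟨0, by omega⟩ : Fin n) - f) ∣ F.det)
    (k : ℕ) (hk1 : 1 ≤ k) (hkl : k < l)
    (hdk : IsGcdMinors F k 1)
    (hJk : reducedIdeal F k 1 = ⊤)
    (hdk1 : ∃ d : MvPolynomial (Fin n) K, IsGcdMinors F (k + 1) d ∧
      (MvPolynomial.X (⟨0, by omega⟩ : Fin n) - f) ∣ d) :
    ∃ U G : Matrix (Fin l) (Fin l) (MvPolynomial (Fin n) K),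
      IsUnit U.det ∧
      (∀ i i' : Fin l, U i i' ∈ MvPolynomial.supported K {t : Fin n | (t : ℕ) ≠ 0}) ∧
      U * F = Matrix.diagonal (fun i : Fin l =>
        if (i : ℕ) < k then 1 else MvPolynomial.X (⟨0, by omega⟩ : Fin n) - f) * G := by
  obtain ⟨n', rfl⟩ : ∃ n', n = n' + 1 := ⟨n - 1, by omega⟩
  obtain ⟨d, hd, hdd⟩ := hdk1
  exact final_aux n' l F f hf k hJk (fun p hp => dvd_trans hdd (hd.1 p hp))
end

section
/- Let F ∈ R^{l×l}, let f ∈ K[z_2, …, z_n], and suppose (z_1 − f) divides det(F). Assume that for some k with 1 ≤ k < l the k×k minors of F have gcd 1 (i.e. d_k(F) = 1 up to a unit), J_k(F) = R, and (z_1 − f) divides d_{k+1}(F). Let F_1 ∈ K[z_2, …, z_n]^{l×l} be the matrix obtained from F by substituting z_1 ↦ f in every entry. Then F_1 has rank exactly k, and the k×k minors of F_1 generate the unit ideal of K[z_2, …, z_n]. -/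
open MvPolynomial Matrix

/-- `F₁` is obtained from `F` by the substitution `z_1 ↦ f` (the `K`-algebra
endomorphism sending `z_1` to `f` and fixing the other variables), applied entrywise.
Its entries lie in the subring `K[z_2,…,z_n]`, and (since `z_1 ↦ f` retracts `R` onto this
subring) the `k × k` minors of `F₁` generate the unit ideal of `K[z_2,…,z_n]` if and only
if they generate the unit ideal of `R`; the latter is how it is stated here. -/
theorem statement9 {K : Type*} [Field K] (n : ℕ) (hn : 2 ≤ n) (l : ℕ)
    (F : Matrix (Fin l) (Fin l) (MvPolynomial (Fin n) K))
    (f : MvPolynomial (Fin n) K)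
    (hf : f ∈ MvPolynomial.supported K {t : Fin n | (t : ℕ) ≠ 0})
    (hdvd : (MvPolynomial.X (⟨0, by omega⟩ : Fin n) - f) ∣ F.det)
    (k : ℕ) (hk1 : 1 ≤ k) (hkl : k < l)
    (hdk : IsGcdMinors F k 1)
    (hJk : reducedIdeal F k 1 = ⊤)
    (hdk1 : ∃ d : MvPolynomial (Fin n) K, IsGcdMinors F (k + 1) d ∧
      (MvPolynomial.X (⟨0, by omega⟩ : Fin n) - f) ∣ d)
    (F₁ : Matrix (Fin l) (Fin l) (MvPolynomial (Fin n) K))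
    (hF₁ : F₁ = F.map fun p => MvPolynomial.aeval
      (fun t : Fin n => if (t : ℕ) = 0 then f else MvPolynomial.X t) p) :
    (∀ i i' : Fin l, F₁ i i' ∈ MvPolynomial.supported K {t : Fin n | (t : ℕ) ≠ 0}) ∧
    HasRank F₁ k ∧
    Ideal.span (minorsSet F₁ k) = ⊤ := by
  set φ : MvPolynomial (Fin n) K →ₐ[K] MvPolynomial (Fin n) K := MvPolynomial.aeval
      (fun t : Fin n => if (t : ℕ) = 0 then f else MvPolynomial.X t) with hφ
  have hφf : φ f = f := by
    have h : f ∈ AlgHom.equalizer φ (AlgHom.id K _) := by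
      refine (Algebra.adjoin_le ?_ : MvPolynomial.supported K {t : Fin n | (t : ℕ) ≠ 0} ≤ _) hf
      rintro _ ⟨t, ht, rfl⟩
      have ht' : (t : ℕ) ≠ 0 := ht
      simp only [SetLike.mem_coe, AlgHom.mem_equalizer, AlgHom.id_apply, hφ, aeval_X, if_neg ht']
    simpa [AlgHom.mem_equalizer] using h
  have hφ0 : φ (MvPolynomial.X (⟨0, by omega⟩ : Fin n) - f) = 0 := by
    rw [map_sub, hφf, hφ, aeval_X]
    simp
  have hφs : ∀ p, φ p ∈ MvPolynomial.supported K {t : Fin n | (t : ℕ) ≠ 0} := by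
    intro p
    induction p using MvPolynomial.induction_on with
    | C a => rw [hφ, aeval_C]; exact Subalgebra.algebraMap_mem _ a
    | add p q hp hq => rw [map_add]; exact add_mem hp hq
    | mul_X p t hp =>
      rw [map_mul]
      refine mul_mem hp ?_
      rw [hφ, aeval_X]
      split_ifs with h
      · exact hf
      · exact Algebra.subset_adjoin ⟨t, h, rfl⟩
  have hdet : ∀ (m : ℕ) (r c : Fin m ↪ Fin l),
      (F₁.submatrix ⇑r ⇑c).det = φ (F.submatrix ⇑r ⇑c).det := by
    intro m r c
    rw [AlgHom.map_det, hF₁]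
    rfl
  have hspan : Ideal.span (minorsSet F₁ k) = ⊤ := by
    have h1 : Ideal.map φ (reducedIdeal F k 1) = ⊤ := by rw [hJk]; exact Ideal.map_top _
    rw [eq_top_iff, ← h1, reducedIdeal, Ideal.map_span]
    refine Ideal.span_mono ?_
    rintro _ ⟨v, ⟨r, c, hv⟩, rfl⟩
    refine ⟨r, c, ?_⟩
    rw [hdet, ← hv, one_mul]
  refine ⟨fun i i' => ?_, ⟨?_, ?_⟩, hspan⟩
  · rw [hF₁]; exact hφs _
  · by_contra! h
    have h2 : Ideal.span (minorsSet F₁ k) = ⊥ := Ideal.span_eq_bot.2 h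
    exact bot_ne_top (h2.symm.trans hspan)
  · rintro _ ⟨r, c, rfl⟩
    obtain ⟨d, hd, hdd⟩ := hdk1
    obtain ⟨q, hq⟩ := hdd.trans (hd.1 _ ⟨r, c, rfl⟩)
    rw [hdet, hq, map_mul, hφ0, zero_mul]
end

section
/- Let h_1, …, h_l ∈ K[z_n] with h_1 | h_2 | ⋯ | h_l, let f ∈ K[z_2, …, z_n], let V ∈ K[z_2, …, z_n]^{l×l} be a unimodular matrix, and set B = diag(h_1, …, h_l) · V · diag(1, …, 1, z_1 − f). Assume that for every k = 1, …, l−1 the product h_1⋯h_k is a greatest common divisor of the k×k minors of B and J_k(B) = R. Let B_1 ∈ R^{l×(l−1)} be the submatrix consisting of the first l−1 columns of B. Then for every i = 1, …, l−1, the product h_1⋯h_i is a greatest common divisor of the i×i minors of B_1 and J_i(B_1) = R. -/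
open MvPolynomial Matrix

/-- `B₁` is the submatrix of the first `l - 1` columns of `B`. -/
theorem statement10 {K : Type*} [Field K] (n : ℕ) (hn : 2 ≤ n) (l : ℕ) (hl : 0 < l)
    (h : Fin l → MvPolynomial (Fin n) K)
    (hsup : ∀ i : Fin l, h i ∈ MvPolynomial.supported K {(⟨n - 1, by omega⟩ : Fin n)})
    (hchain : ∀ i j : Fin l, i ≤ j → h i ∣ h j)
    (f : MvPolynomial (Fin n) K)
    (hf : f ∈ MvPolynomial.supported K {t : Fin n | (t : ℕ) ≠ 0})
    (V : Matrix (Fin l) (Fin l) (MvPolynomial (Fin n) K))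
    (hVsup : ∀ i j : Fin l, V i j ∈ MvPolynomial.supported K {t : Fin n | (t : ℕ) ≠ 0})
    (hVuni : IsUnit V.det)
    (B : Matrix (Fin l) (Fin l) (MvPolynomial (Fin n) K))
    (hB : B = Matrix.diagonal h * V *
      Matrix.diagonal (fun i : Fin l =>
        if (i : ℕ) = l - 1 then MvPolynomial.X (⟨0, by omega⟩ : Fin n) - f else 1))
    (hgcd : ∀ k : ℕ, 1 ≤ k → k ≤ l - 1 →
      IsGcdMinors B k (∏ j ∈ Finset.univ.filter (fun j : Fin l => (j : ℕ) < k), h j) ∧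
      reducedIdeal B k (∏ j ∈ Finset.univ.filter (fun j : Fin l => (j : ℕ) < k), h j) = ⊤)
    (B₁ : Matrix (Fin l) (Fin (l - 1)) (MvPolynomial (Fin n) K))
    (hB₁ : B₁ = B.submatrix id (Fin.castLE (by omega : l - 1 ≤ l))) :
    ∀ i : ℕ, 1 ≤ i → i ≤ l - 1 →
      IsGcdMinors B₁ i (∏ j ∈ Finset.univ.filter (fun j : Fin l => (j : ℕ) < i), h j) ∧
      reducedIdeal B₁ i (∏ j ∈ Finset.univ.filter (fun j : Fin l => (j : ℕ) < i), h j) = ⊤ := by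
  intro k hk1 hk2
  obtain ⟨⟨hdvd, -⟩, htop⟩ := hgcd k hk1 hk2
  set d := ∏ j ∈ Finset.univ.filter (fun j : Fin l => (j : ℕ) < k), h j with hd
  set φ : MvPolynomial (Fin n) K →ₐ[K] MvPolynomial (Fin n) K :=
    MvPolynomial.aeval (fun t : Fin n => if (t : ℕ) = 0 then f else MvPolynomial.X t) with hφ
  have hfix : ∀ p ∈ MvPolynomial.supported K {t : Fin n | (t : ℕ) ≠ 0}, φ p = p := by
    intro p hp
    have hle : MvPolynomial.supported K {t : Fin n | (t : ℕ) ≠ 0} ≤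
        AlgHom.equalizer φ (AlgHom.id K _) := by
      refine Algebra.adjoin_le ?_
      rintro _ ⟨t, ht, rfl⟩
      have ht' : ¬ (t : ℕ) = 0 := ht
      change φ (MvPolynomial.X t) = MvPolynomial.X t
      rw [hφ, MvPolynomial.aeval_X, if_neg ht']
    exact hle hp
  have hh : ∀ i, φ (h i) = h i := by
    intro i
    refine hfix _ (MvPolynomial.supported_mono ?_ (hsup i))
    rintro t rfl
    change n - 1 ≠ 0
    omega
  have hφd : φ d = d := by
    rw [hd, map_prod]
    exact Finset.prod_congr rfl fun i _ => hh i
  have hφX : φ (MvPolynomial.X (⟨0, by omega⟩ : Fin n) - f) = 0 := by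
    rw [map_sub, hfix f hf, hφ, MvPolynomial.aeval_X, if_pos rfl, sub_self]
  have hBe : ∀ i j, B i j = h i * V i j * (if (j : ℕ) = l - 1 then
      MvPolynomial.X (⟨0, by omega⟩ : Fin n) - f else 1) := by
    intro i j
    rw [hB, Matrix.mul_diagonal, Matrix.diagonal_mul]
  have hBlast : ∀ i j : Fin l, (j : ℕ) = l - 1 → φ (B i j) = 0 := by
    intro i j hj
    rw [hBe, if_pos hj, map_mul, hφX, mul_zero]
  have hBfix : ∀ i j : Fin l, (j : ℕ) ≠ l - 1 → φ (B i j) = B i j := by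
    intro i j hj
    rw [hBe, if_neg hj, mul_one, map_mul, hh, hfix _ (hVsup i j)]
  -- minors of `B₁` are minors of `B`
  have hsub : ∀ p ∈ minorsSet B₁ k, p ∈ minorsSet B k := by
    rintro p ⟨r, c, rfl⟩
    refine ⟨r, c.trans (Fin.castLEEmb (by omega)), ?_⟩
    rw [hB₁]
    rfl
  -- images of minors of `B`
  have himg : ∀ p ∈ minorsSet B k, φ p = 0 ∨ φ p ∈ minorsSet B₁ k := by
    rintro p ⟨r, c, rfl⟩
    by_cases hc : ∃ j, ((c j : Fin l) : ℕ) = l - 1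
    · left
      obtain ⟨j, hj⟩ := hc
      rw [AlgHom.map_det]
      exact Matrix.det_eq_zero_of_column_eq_zero j fun i => hBlast _ _ hj
    · right
      push Not at hc
      refine ⟨r, ⟨fun j => ⟨(c j : ℕ), by have := hc j; have := (c j).2; omega⟩, ?_⟩, ?_⟩
      · intro a b hab
        apply c.injective
        exact Fin.ext (by simpa using hab)
      · rw [AlgHom.map_det, hB₁]
        congr 1
        ext1 a b
        exact hBfix _ _ (hc b)
  have htop₁ : reducedIdeal B₁ k d = ⊤ := by
    by_cases hd0 : d = 0
    · -- all minors vanish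
      have hm : (0 : MvPolynomial (Fin n) K) ∈ minorsSet B₁ k := by
        have hmem : (B₁.submatrix (Fin.castLEEmb (by omega : k ≤ l))
            (Fin.castLEEmb hk2)).det ∈ minorsSet B₁ k := ⟨_, _, rfl⟩
        have h0 := hdvd _ (hsub _ hmem)
        rw [hd0, zero_dvd_iff] at h0
        rwa [h0] at hmem
      rw [Ideal.eq_top_iff_one]
      refine Ideal.subset_span ?_
      change d * 1 ∈ minorsSet B₁ k
      rwa [hd0, zero_mul]
    · have hle : Ideal.map φ (reducedIdeal B k d) ≤ reducedIdeal B₁ k d := by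
        unfold reducedIdeal
        rw [Ideal.map_span, Ideal.span_le]
        rintro _ ⟨v, hv, rfl⟩
        have hv' : d * v ∈ minorsSet B k := hv
        have key := himg _ hv'
        rw [map_mul, hφd] at key
        rcases key with h0 | h1
        · rw [(mul_eq_zero.mp h0).resolve_left hd0]
          exact Ideal.zero_mem _
        · exact Ideal.subset_span h1
      rw [htop, Ideal.map_top] at hle
      exact top_le_iff.mp hle
  refine ⟨⟨fun p hp => hdvd p (hsub p hp), fun e he => ?_⟩, htop₁⟩
  have hle : reducedIdeal B₁ k d ≤ Submodule.comap (LinearMap.mulLeft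
      (MvPolynomial (Fin n) K) d) (Ideal.span {e}) := by
    refine Ideal.span_le.mpr fun v hv => ?_
    exact Ideal.mem_span_singleton.mpr (he _ hv)
  have h1 : (1 : MvPolynomial (Fin n) K) ∈ reducedIdeal B₁ k d := htop₁ ▸ Submodule.mem_top
  have h2 : d * 1 ∈ Ideal.span {e} := hle h1
  rw [mul_one] at h2
  exact Ideal.mem_span_singleton.mp h2
end
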